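/- The sequence (s_n)_{n≥1} of numbers of simple permutations is not P-recursive. -/

import Mathlib

def IsPermBlock {n : ℕ} (π : Equiv.Perm (Fin n)) (B : Finset (Fin n)) : Prop :=
  B.Nonempty ∧ (∃ i j : Fin n, B = Finset.Icc i j) ∧
    ∃ a b : Fin n, B.image π = Finset.Icc a b

def IsSimplePerm {n : ℕ} (π : Equiv.Perm (Fin n)) : Prop :=
  ∀ B : Finset (Fin n), IsPermBlock π B → B.card = 1 ∨ B = Finset.univ

noncomputable def simpleCount (n : ℕ) : ℕ :=
  Nat.card {π : Equiv.Perm (Fin n) // IsSimplePerm π}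

/-- A sequence `(aₙ)_{n≥1}` of rationals is P-recursive if there are polynomials
`p₀, …, p_d ∈ ℚ[x]` with `p_d ≠ 0` such that
`p₀(n)aₙ + p₁(n)a_{n+1} + ⋯ + p_d(n)a_{n+d} = 0` for all `n ≥ 1`. -/
def IsPRecursive (a : ℕ → ℚ) : Prop :=
  ∃ (d : ℕ) (p : ℕ → Polynomial ℚ), p d ≠ 0 ∧
    ∀ n : ℕ, 1 ≤ n →
      ∑ i ∈ Finset.range (d + 1), (p i).eval (n : ℚ) * a (n + i) = 0

open PowerSeries in
lemma exists_X_pow_mul {a : ℚ⟦X⟧} (ha : a ≠ 0) :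
    ∃ (i : ℕ) (u : ℚ⟦X⟧), a = X ^ i * u ∧ constantCoeff u ≠ 0 := by
  obtain ⟨u, hu⟩ := X_pow_order_dvd (φ := a)
  refine ⟨a.order.toNat, u, hu, ?_⟩
  intro h0
  have h1 := coeff_order ha
  apply h1
  have h2 : coeff (0 + a.order.toNat) (X ^ a.order.toNat * u) = coeff 0 u := coeff_X_pow_mul u _ 0
  rw [zero_add] at h2
  rw [coeff_zero_eq_constantCoeff_apply] at h2
  rw [← h0, ← h2, ← hu]

open PowerSeries in
lemma ode_hom_zero {a H : ℚ⟦X⟧} (ha : a ≠ 0)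
    (h : a * (X ^ 2 * d⁄dX ℚ H) = (X ^ 2 * d⁄dX ℚ a + (1 - X) * a) * H) : H = 0 := by
  by_contra hH
  obtain ⟨i, u, rfl, hu⟩ := exists_X_pow_mul ha
  obtain ⟨j, v, rfl, hv⟩ := exists_X_pow_mul hH
  have key : ∀ (k : ℕ) (w : ℚ⟦X⟧), X * d⁄dX ℚ (X ^ k * w) = X ^ k * ((k : ℚ⟦X⟧) * w + X * d⁄dX ℚ w) := by
    intro k w
    rw [Derivation.leibniz, derivative_pow]
    simp only [smul_eq_mul, derivative_X]
    rcases k with _ | k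
    · simp
    · simp only [Nat.add_sub_cancel]; ring
  have h2 : X ^ (i + j) * (X * (u * ((j : ℚ⟦X⟧) * v + X * d⁄dX ℚ v) - v * ((i : ℚ⟦X⟧) * u + X * d⁄dX ℚ u)))
      = X ^ (i + j) * ((1 - X) * u * v) := by
    have e1 : X ^ i * u * (X ^ 2 * d⁄dX ℚ (X ^ j * v)) = X ^ i * u * X * (X * d⁄dX ℚ (X ^ j * v)) := by
      ring
    have e2 : (X ^ 2 * d⁄dX ℚ (X ^ i * u) + (1 - X) * (X ^ i * u)) * (X ^ j * v)
      = X * (X * d⁄dX ℚ (X ^ i * u)) * (X ^ j * v) + (1 - X) * (X ^ i * u) * (X ^ j * v) := by ring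
    rw [e1, e2, key, key] at h
    linear_combination h
  have h3 := mul_left_cancel₀ (pow_ne_zero (i + j) (X_ne_zero (R := ℚ))) h2
  have h4 := congrArg constantCoeff h3
  simp at h4
  tauto

noncomputable def facSeries : PowerSeries ℚ :=
  PowerSeries.mk fun n => if n = 0 then 0 else (n.factorial : ℚ)

/-- evaluation of a bivariate polynomial at `(X, F)` -/
noncomputable def evF : Polynomial (Polynomial ℚ) →+* PowerSeries ℚ :=
  Polynomial.eval₂RingHom Polynomial.coeToPowerSeries.ringHom facSeries

/-- `δ = X² d/dX` -/
noncomputable def delta (p : PowerSeries ℚ) : PowerSeries ℚ :=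
  PowerSeries.X ^ 2 * PowerSeries.derivative ℚ p

noncomputable def LF : PowerSeries ℚ :=
  (1 - PowerSeries.X) * facSeries - PowerSeries.X

lemma delta_facSeries : delta facSeries = LF := by
  ext n
  rw [delta, LF, sub_mul, one_mul, map_sub, map_sub, PowerSeries.coeff_X_pow_mul']
  rcases n with _ | _ | n
  · simp [facSeries]
  · simp [facSeries, PowerSeries.coeff_succ_X_mul, PowerSeries.coeff_X]
  · rw [PowerSeries.coeff_succ_X_mul]
    simp [facSeries, PowerSeries.coeff_derivative, PowerSeries.coeff_X, Nat.factorial_succ]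
    ring

lemma delta_add (p q) : delta (p + q) = delta p + delta q := by
  simp [delta, mul_add]

lemma delta_mul (p q) : delta (p * q) = delta p * q + p * delta q := by
  simp [delta, Derivation.leibniz]; ring

lemma delta_pow (p) (n : ℕ) : delta (p ^ n) = n * p ^ (n - 1) * delta p := by
  simp [delta]; ring

lemma delta_X : delta PowerSeries.X = PowerSeries.X ^ 2 := by
  simp [delta]

lemma delta_coe (a : Polynomial ℚ) :
    delta (a : PowerSeries ℚ) = ((Polynomial.X ^ 2 * Polynomial.derivative a : Polynomial ℚ) : PowerSeries ℚ) := by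
  simp [delta, PowerSeries.derivative_coe]

lemma evF_C (a : Polynomial ℚ) : evF (Polynomial.C a) = (a : PowerSeries ℚ) := by
  simp [evF]

lemma evF_X : evF Polynomial.X = facSeries := by
  simp [evF]

lemma evF_monomial (n : ℕ) (a : Polynomial ℚ) :
    evF (Polynomial.monomial n a) = (a : PowerSeries ℚ) * facSeries ^ n := by
  simp [evF]

lemma exists_E (P : Polynomial (Polynomial ℚ)) : ∃ Q : Polynomial (Polynomial ℚ),
    evF Q = delta (evF P) ∧ ∀ j, Q.coeff j = Polynomial.X ^ 2 * Polynomial.derivative (P.coeff j)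
      + (j : Polynomial ℚ) * (1 - Polynomial.X) * P.coeff j - ((j : Polynomial ℚ) + 1) * Polynomial.X * P.coeff (j + 1) := by
  induction P using Polynomial.induction_on' with
  | add p q hp hq =>
    obtain ⟨Q1, h1, h1'⟩ := hp
    obtain ⟨Q2, h2, h2'⟩ := hq
    refine ⟨Q1 + Q2, by rw [map_add, map_add, delta_add, h1, h2], fun j => ?_⟩
    rw [Polynomial.coeff_add, h1', h2']
    simp only [Polynomial.coeff_add, map_add]
    ring
  | monomial n a =>
    refine ⟨Polynomial.monomial n (Polynomial.X ^ 2 * Polynomial.derivative a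
      + (n : Polynomial ℚ) * (1 - Polynomial.X) * a) - Polynomial.monomial (n - 1) ((n : Polynomial ℚ) * Polynomial.X * a), ?_, ?_⟩
    · rw [map_sub, evF_monomial, evF_monomial, evF_monomial, delta_mul, delta_pow, delta_coe,
        delta_facSeries, LF]
      rcases n with _ | n
      · simp
      · simp only [Nat.add_sub_cancel, Polynomial.coe_add, Polynomial.coe_mul, Polynomial.coe_pow,
          Polynomial.coe_X, Polynomial.coe_sub, Polynomial.coe_one]
        have : (((n + 1 : ℕ) : Polynomial ℚ) : PowerSeries ℚ) = ((n + 1 : ℕ) : PowerSeries ℚ) := by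
          exact map_natCast Polynomial.coeToPowerSeries.ringHom _
        rw [this]
        ring
    · intro j
      simp only [Polynomial.coeff_sub, Polynomial.coeff_monomial]
      rcases n with _ | n
      · by_cases hj : j = 0
        · subst hj; simp
        · simp [Ne.symm hj]
      · by_cases hj : j = n + 1
        · subst hj; simp
        · by_cases hj2 : j = n
          · subst hj2; simp
          · simp [Ne.symm hj, Ne.symm hj2]

/-- factorial series is not rational -/
lemma facSeries_not_rational (q p : Polynomial ℚ) (h : (q : PowerSeries ℚ) * facSeries = p) : q = 0 := by
  by_contra hq
  classical
  have hex : ∃ i, q.coeff i ≠ 0 := by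
    by_contra hcon
    push Not at hcon
    exact hq (Polynomial.ext (by simpa using hcon))
  set i := Nat.find hex with hi
  have hqi : q.coeff i ≠ 0 := Nat.find_spec hex
  have hlt : ∀ j, j < i → q.coeff j = 0 := fun j hj => by
    by_contra h'; exact Nat.find_min hex hj h'
  set C := ∑ j ∈ Finset.range (q.natDegree + 1), |q.coeff j| with hC
  have hbound : ∀ n : ℕ, 1 ≤ n → q.natDegree ≤ n → p.natDegree < n → |q.coeff i| * n ≤ C := by
    intro n hn1 hn2 hn3
    have hc := congrArg (PowerSeries.coeff (n + i)) h
    rw [Polynomial.coeff_coe, Polynomial.coeff_eq_zero_of_natDegree_lt (p := p) (by omega),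
      PowerSeries.coeff_mul, Finset.Nat.sum_antidiagonal_eq_sum_range_succ_mk] at hc
    simp only [Polynomial.coeff_coe] at hc
    rw [← Finset.add_sum_erase _ _ (show i ∈ Finset.range (n + i).succ by simp)] at hc
    simp only [Nat.add_sub_cancel] at hc
    have hfn : PowerSeries.coeff n facSeries = (n.factorial : ℚ) := by
      simp [facSeries]; omega
    rw [hfn] at hc
    have h1 : |q.coeff i| * (n.factorial : ℚ) ≤ C * ((n - 1).factorial : ℚ) := by
      have : q.coeff i * (n.factorial : ℚ) = - ∑ x ∈ (Finset.range (n + i).succ).erase i,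
        q.coeff x * PowerSeries.coeff (n + i - x) facSeries := by linarith
      rw [← abs_of_nonneg (show (0:ℚ) ≤ n.factorial by positivity), ← abs_mul, this, abs_neg]
      calc _ ≤ ∑ x ∈ (Finset.range (n + i).succ).erase i,
            |q.coeff x * PowerSeries.coeff (n + i - x) facSeries| := Finset.abs_sum_le_sum_abs _ _
        _ ≤ ∑ x ∈ (Finset.range (n + i).succ).erase i, |q.coeff x| * ((n - 1).factorial : ℚ) := by
            apply Finset.sum_le_sum
            intro x hx
            rw [Finset.mem_erase] at hx
            rcases Nat.lt_or_ge x i with hxi | hxi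
            · rw [hlt x hxi]; simp
            · rw [abs_mul]
              apply mul_le_mul_of_nonneg_left _ (abs_nonneg _)
              have hx2 : n + i - x ≤ n - 1 := by omega
              simp only [facSeries, PowerSeries.coeff_mk]
              split_ifs
              · simp
              · rw [abs_of_nonneg (by positivity)]
                exact_mod_cast Nat.factorial_le hx2
        _ ≤ ∑ x ∈ Finset.range (n + i).succ, |q.coeff x| * ((n - 1).factorial : ℚ) := by
            apply Finset.sum_le_sum_of_subset_of_nonneg (Finset.erase_subset _ _)
            intros; positivity
        _ = C * ((n - 1).factorial : ℚ) := by
            rw [← Finset.sum_mul, hC]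
            congr 1
            symm
            apply Finset.sum_subset
            · intro x; simp; omega
            · intro x _ hx
              simp at hx
              rw [Polynomial.coeff_eq_zero_of_natDegree_lt (by omega)]; simp
    have h2 : (n.factorial : ℚ) = n * ((n - 1).factorial : ℚ) := by
      exact_mod_cast (Nat.mul_factorial_pred (by omega)).symm
    rw [h2, ← mul_assoc] at h1
    exact le_of_mul_le_mul_right h1 (by positivity)
  obtain ⟨N, hN⟩ := exists_nat_gt (C / |q.coeff i|)
  have hpos : 0 < |q.coeff i| := abs_pos.mpr hqi
  have h3 := hbound (N + 1 + q.natDegree + p.natDegree) (by omega) (by omega) (by omega)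
  rw [div_lt_iff₀ hpos] at hN
  push_cast at h3
  have : (N : ℚ) * |q.coeff i| ≤ |q.coeff i| * (N + 1 + q.natDegree + p.natDegree) := by
    rw [mul_comm]
    apply mul_le_mul_of_nonneg_left _ hpos.le
    have : (0:ℚ) ≤ q.natDegree := by positivity
    have : (0:ℚ) ≤ p.natDegree := by positivity
    linarith
  linarith

lemma evF_injective (P : Polynomial (Polynomial ℚ)) (hP : evF P = 0) : P = 0 := by
  by_contra hne
  have hex : ∃ e : ℕ, ∃ P : Polynomial (Polynomial ℚ), P ≠ 0 ∧ evF P = 0 ∧ P.natDegree = e :=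
    ⟨_, P, hne, hP, rfl⟩
  classical
  obtain ⟨P, hne, hP, he⟩ := Nat.find_spec hex
  have hmin : ∀ R : Polynomial (Polynomial ℚ), evF R = 0 → R.natDegree < P.natDegree → R = 0 := by
    intro R hR hlt
    by_contra hR0
    exact Nat.find_min hex (by rw [← he]; exact hlt) ⟨R, hR0, hR, rfl⟩
  set e := P.natDegree with hedef
  set a := P.coeff e with ha
  have ha0 : a ≠ 0 := by
    rw [ha, hedef]; exact Polynomial.leadingCoeff_ne_zero.mpr hne
  rcases Nat.eq_zero_or_pos e with h0 | hpos
  · have : P = Polynomial.C a := by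
      rw [ha, h0]; exact Polynomial.eq_C_of_natDegree_eq_zero (by omega)
    rw [this, evF_C] at hP
    exact ha0 (by exact_mod_cast hP)
  obtain ⟨Q, hQ, hQc⟩ := exists_E P
  set b := P.coeff (e - 1) with hb
  set R := Polynomial.C a * Q - Polynomial.C (Q.coeff e) * P with hRdef
  have hRev : evF R = 0 := by
    rw [hRdef, map_sub, map_mul, map_mul, hQ, hP]; simp [delta]
  have hRc : ∀ j, R.coeff j = a * Q.coeff j - Q.coeff e * P.coeff j := by
    intro j; simp [hRdef]
  have hz : ∀ j, e < j → P.coeff j = 0 := fun j hj => Polynomial.coeff_eq_zero_of_natDegree_lt hj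
  have hR0 : R = 0 := by
    apply hmin R hRev
    have : R.natDegree ≤ e - 1 := by
      rw [Polynomial.natDegree_le_iff_coeff_eq_zero]
      intro j hj
      rw [hRc]
      rcases Nat.lt_or_ge e j with h | h
      · rw [hQc, hz j h, hz (j+1) (by omega)]; simp
      · have : j = e := by omega
        subst this; rw [← ha]; ring
    omega
  have h1 := hRc (e - 1)
  rw [hR0, hQc, hQc, hz (e+1) (by omega), Nat.sub_add_cancel hpos, ← ha, ← hb] at h1
  have hcast : ((e - 1 : ℕ) : Polynomial ℚ) = (e : Polynomial ℚ) - 1 := by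
    push_cast [Nat.cast_sub hpos]; rfl
  rw [hcast] at h1
  simp only [Polynomial.coeff_zero] at h1
  have h2 := congrArg (Polynomial.coeToPowerSeries.ringHom) h1
  simp only [map_zero, map_sub, map_mul, map_add, map_pow, map_natCast, map_one,
    Polynomial.coeToPowerSeries.ringHom_apply, Polynomial.coe_X] at h2
  have hH : (e : PowerSeries ℚ) * (a : PowerSeries ℚ) * facSeries + (b : PowerSeries ℚ) = 0 := by
    apply ode_hom_zero (a := (a : PowerSeries ℚ)) (by exact_mod_cast ha0)
    have hd : ∀ p, PowerSeries.X ^ 2 * PowerSeries.derivative ℚ p = delta p := fun p => rfl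
    rw [hd, hd, delta_add, delta_mul, delta_mul, delta_facSeries]
    have : delta (e : PowerSeries ℚ) = 0 := by simp [delta]
    rw [this, delta_coe, delta_coe, LF]
    simp only [Polynomial.coe_mul, Polynomial.coe_pow, Polynomial.coe_X]
    linear_combination -h2
  have := facSeries_not_rational (e * a) (-b) (by
    simp only [Polynomial.coe_mul, Polynomial.coe_neg]
    have : ((e : Polynomial ℚ) : PowerSeries ℚ) = (e : PowerSeries ℚ) :=
      map_natCast Polynomial.coeToPowerSeries.ringHom _
    rw [this]
    linear_combination hH)
  rcases mul_eq_zero.mp this with h | h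
  · have := Nat.cast_eq_zero.mp h; omega
  · exact ha0 h

/-! ### the inverse series -/

/-- `θ = X d/dX` -/
noncomputable def theta (p : PowerSeries ℚ) : PowerSeries ℚ :=
  PowerSeries.X * PowerSeries.derivative ℚ p

lemma theta_sub (p q) : theta (p - q) = theta p - theta q := by
  simp [theta, mul_sub]

lemma theta_iter_sub (k : ℕ) (p q) : theta^[k] (p - q) = theta^[k] p - theta^[k] q := by
  induction k generalizing p q with
  | zero => rfl
  | succ k ih => rw [Function.iterate_succ_apply, Function.iterate_succ_apply,
      Function.iterate_succ_apply, theta_sub, ih]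

lemma hasSubst_F : PowerSeries.HasSubst facSeries :=
  PowerSeries.HasSubst.of_constantCoeff_zero' (by
    rw [← PowerSeries.coeff_zero_eq_constantCoeff_apply]; simp [facSeries])

lemma LF_mul_theta_subst (p : PowerSeries ℚ) :
    LF * (theta p).subst facSeries = facSeries * delta (p.subst facSeries) := by
  rw [theta, PowerSeries.subst_mul hasSubst_F, PowerSeries.subst_X hasSubst_F, delta,
    PowerSeries.derivative_subst hasSubst_F, ← delta_facSeries, delta]
  ring

/-- the evaluation at the curve `L = 0` -/
noncomputable def phi : Polynomial (Polynomial ℚ) →+* PowerSeries ℚ :=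
  Polynomial.eval₂RingHom
    (Polynomial.aeval (PowerSeries.X * (1 + PowerSeries.X)⁻¹ : PowerSeries ℚ)).toRingHom
    PowerSeries.X

/-- `L` as polynomial -/
noncomputable def Lpoly : Polynomial (Polynomial ℚ) :=
  (1 - Polynomial.C Polynomial.X) * Polynomial.X - Polynomial.C Polynomial.X

lemma one_add_X_mul_inv : (1 + PowerSeries.X : PowerSeries ℚ) * (1 + PowerSeries.X)⁻¹ = 1 :=
  PowerSeries.mul_inv_cancel _ (by simp)

lemma evF_Lpoly : evF Lpoly = LF := by
  simp only [Lpoly, map_sub, map_mul, map_one, evF_C, evF_X, LF, Polynomial.coe_X]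

lemma phi_X : phi Polynomial.X = PowerSeries.X := by simp [phi]

lemma phi_CX : phi (Polynomial.C Polynomial.X) = PowerSeries.X * (1 + PowerSeries.X)⁻¹ := by
  simp [phi]

lemma phi_Lpoly : phi Lpoly = 0 := by
  simp only [Lpoly, map_sub, map_mul, map_one, phi_X, phi_CX]
  linear_combination (-PowerSeries.X) * one_add_X_mul_inv

lemma evF_mapC (q : Polynomial ℚ) :
    evF (q.map Polynomial.C) = (q : PowerSeries ℚ).subst facSeries := by
  rw [PowerSeries.subst_coe hasSubst_F, evF]
  simp only [Polynomial.coe_eval₂RingHom, Polynomial.eval₂_map, Polynomial.aeval_def]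
  congr 1
  ext1 x
  simp

lemma phi_mapC (q : Polynomial ℚ) : phi (q.map Polynomial.C) = (q : PowerSeries ℚ) := by
  induction q using Polynomial.induction_on' with
  | add p q hp hq => rw [Polynomial.map_add, map_add, hp, hq, Polynomial.coe_add]
  | monomial n a =>
    rw [Polynomial.map_monomial, ← Polynomial.C_mul_X_pow_eq_monomial, map_mul, map_pow, phi_X,
      Polynomial.coe_monomial, PowerSeries.monomial_eq_C_mul_X_pow]
    simp [phi]

lemma exists_N (W : PowerSeries ℚ) (hW : W.subst facSeries = (PowerSeries.X : PowerSeries ℚ)) (k : ℕ) :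
    ∃ N : Polynomial (Polynomial ℚ),
      evF N = LF ^ (2 * k + 1) * (theta^[k + 1] W).subst facSeries ∧ phi N ≠ 0 := by
  have hinv : (1 + PowerSeries.X : PowerSeries ℚ)⁻¹ ≠ 0 := by
    intro h
    have := one_add_X_mul_inv
    rw [h] at this
    simp at this
  have h1X : (1 + PowerSeries.X : PowerSeries ℚ) ≠ 0 := by
    intro h
    have := one_add_X_mul_inv
    rw [h] at this
    simp at this
  have hX := PowerSeries.X_ne_zero (R := ℚ)
  induction k with
  | zero =>
    refine ⟨Polynomial.X * (Polynomial.C Polynomial.X) ^ 2, ?_, ?_⟩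
    · simp only [Function.iterate_succ, Function.iterate_zero, Function.comp, id]
      rw [mul_zero, zero_add, pow_one, LF_mul_theta_subst, hW, delta_X, map_mul, map_pow, evF_X,
        evF_C, Polynomial.coe_X]
    · rw [map_mul, map_pow, phi_X, phi_CX]
      exact mul_ne_zero hX (pow_ne_zero _ (mul_ne_zero hX hinv))
  | succ k ih =>
    obtain ⟨N, hN, hN'⟩ := ih
    obtain ⟨Q, hQ, -⟩ := exists_E N
    set EL : Polynomial (Polynomial ℚ) := -(Polynomial.C (Polynomial.X : Polynomial ℚ)) ^ 2 * (1 + Polynomial.X)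
      + (1 - Polynomial.C Polynomial.X) * Lpoly with hEL
    have hELev : evF EL = delta LF := by
      rw [hEL, map_add, map_mul, map_mul, map_neg, map_pow, map_add, map_sub, map_one, evF_C, evF_X,
        evF_Lpoly, Polynomial.coe_X]
      have e : LF = facSeries + (-1) * (PowerSeries.X * facSeries) + (-1) * PowerSeries.X := by
        rw [LF]; ring
      have e0 : delta (-1) = 0 := by simp [delta]
      conv_rhs => rw [e, delta_add, delta_add, delta_mul, delta_mul (-1), delta_mul, e0,
        delta_facSeries, delta_X]
      ring
    refine ⟨Polynomial.X * (Lpoly * Q - ((2 * k + 1 : ℕ) : Polynomial (Polynomial ℚ)) * EL * N), ?_, ?_⟩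
    · rw [map_mul, map_sub, map_mul, map_mul, map_mul, map_natCast, hQ, hELev, hN, evF_X, evF_Lpoly,
        delta_mul, delta_pow, Function.iterate_succ_apply' _ (k + 1)]
      have := LF_mul_theta_subst (theta^[k + 1] W)
      have e2 : LF ^ (2 * (k + 1) + 1) * (theta (theta^[k + 1] W)).subst facSeries
        = LF ^ (2 * k + 2) * (LF * (theta (theta^[k + 1] W)).subst facSeries) := by ring
      rw [e2, this]
      simp only [Nat.add_sub_cancel]
      ring
    · rw [map_mul, map_sub, map_mul, phi_Lpoly, zero_mul, zero_sub, map_mul, map_mul, map_natCast,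
        phi_X]
      refine mul_ne_zero hX (neg_ne_zero.mpr (mul_ne_zero (mul_ne_zero ?_ ?_) hN'))
      · intro h0
        have h1 := congrArg PowerSeries.constantCoeff h0
        rw [map_natCast, map_zero] at h1
        have := Nat.cast_eq_zero.mp h1
        omega
      · rw [hEL, map_add, map_mul, map_mul, phi_Lpoly, mul_zero, add_zero, map_neg, map_pow,
          map_add, map_one, phi_X, phi_CX]
        exact mul_ne_zero (neg_ne_zero.mpr (pow_ne_zero _ (mul_ne_zero hX hinv))) h1X

lemma exists_M (W : PowerSeries ℚ) (hW : W.subst facSeries = (PowerSeries.X : PowerSeries ℚ)) (K k : ℕ)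
    (hk : k ≤ K) :
    ∃ M : Polynomial (Polynomial ℚ),
      evF M = LF ^ (2 * K + 1) * (theta^[k] W).subst facSeries ∧ phi M = 0 := by
  rcases k with _ | j
  · refine ⟨Lpoly ^ (2 * K + 1) * Polynomial.C Polynomial.X, ?_, ?_⟩
    · rw [map_mul, map_pow, evF_Lpoly, evF_C, Polynomial.coe_X, Function.iterate_zero, id, hW]
    · rw [map_mul, map_pow, phi_Lpoly]; simp
  · obtain ⟨N, hN, -⟩ := exists_N W hW j
    refine ⟨Lpoly ^ (2 * (K - j)) * N, ?_, ?_⟩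
    · rw [map_mul, map_pow, evF_Lpoly, hN, ← mul_assoc, ← pow_add]
      congr 2; omega
    · rw [map_mul, map_pow, phi_Lpoly, zero_pow (by omega), zero_mul]

lemma subst_sum' {ι : Type*} (s : Finset ι) (f : ι → PowerSeries ℚ) :
    (∑ i ∈ s, f i).subst facSeries = ∑ i ∈ s, (f i).subst facSeries := by
  rw [← PowerSeries.coe_substAlgHom hasSubst_F, map_sum]

lemma no_relation_W (W : PowerSeries ℚ) (hW : W.subst facSeries = (PowerSeries.X : PowerSeries ℚ))
    (K : ℕ) (q : ℕ → Polynomial ℚ) (r : Polynomial ℚ) (hq : q (K + 1) ≠ 0)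
    (h : ∑ k ∈ Finset.range (K + 2), (q k : PowerSeries ℚ) * theta^[k] W = r) : False := by
  obtain ⟨N, hN, hN'⟩ := exists_N W hW K
  choose! M hM hM' using exists_M W hW K
  have h2 := congrArg (PowerSeries.subst facSeries) h
  rw [subst_sum', Finset.sum_range_succ] at h2
  simp only [PowerSeries.subst_mul hasSubst_F] at h2
  set P : Polynomial (Polynomial ℚ) := ∑ k ∈ Finset.range (K + 1), (q k).map Polynomial.C * M k
    + (q (K + 1)).map Polynomial.C * N - Lpoly ^ (2 * K + 1) * r.map Polynomial.C with hP
  have hP0 : evF P = 0 := by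
    rw [hP, map_sub, map_add, map_sum, map_mul, map_mul, map_pow, evF_Lpoly, evF_mapC, evF_mapC,
      ← h2, hN, mul_add, Finset.mul_sum]
    have : ∑ k ∈ Finset.range (K + 1), evF ((q k).map Polynomial.C * M k) =
      ∑ k ∈ Finset.range (K + 1), LF ^ (2 * K + 1) *
        ((q k : PowerSeries ℚ).subst facSeries * (theta^[k] W).subst facSeries) := by
      apply Finset.sum_congr rfl
      intro k hk
      rw [map_mul, evF_mapC, hM k (by simp at hk; omega)]
      ring
    rw [this]
    ring
  have hP1 := evF_injective P hP0
  have hP2 := congrArg phi hP1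
  rw [hP, map_sub, map_add, map_sum, map_mul, map_mul, map_pow, phi_Lpoly, map_zero,
    Finset.sum_eq_zero, phi_mapC] at hP2
  · simp at hP2
    tauto
  · intro k hk
    rw [map_mul, hM' k (by simp at hk; omega), mul_zero]

lemma theta_rat (U : PowerSeries ℚ) (u : Polynomial ℚ) (hU : (1 + PowerSeries.X : PowerSeries ℚ) * U = (u : PowerSeries ℚ)) (k : ℕ) :
    ∃ v : Polynomial ℚ, (1 + PowerSeries.X : PowerSeries ℚ) ^ (k + 1) * theta^[k] U = (v : PowerSeries ℚ) := by
  induction k with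
  | zero => exact ⟨u, by simpa using hU⟩
  | succ k ih =>
    obtain ⟨v, hv⟩ := ih
    have h1 := congrArg theta hv
    rw [theta, theta, PowerSeries.derivative_coe, Derivation.leibniz, PowerSeries.derivative_pow] at h1
    simp only [map_add, PowerSeries.derivative_X, PowerSeries.derivative_one, smul_eq_mul,
      Nat.add_sub_cancel, zero_add, mul_one] at h1
    refine ⟨(1 + Polynomial.X) * (Polynomial.X * Polynomial.derivative v)
      - ((k + 1 : ℕ) : Polynomial ℚ) * Polynomial.X * v, ?_⟩
    have e : (((k + 1 : ℕ) : Polynomial ℚ) : PowerSeries ℚ) = ((k + 1 : ℕ) : PowerSeries ℚ) :=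
      map_natCast Polynomial.coeToPowerSeries.ringHom _
    simp only [Polynomial.coe_sub, Polynomial.coe_mul, Polynomial.coe_add, Polynomial.coe_one,
      Polynomial.coe_X]
    rw [e, ← h1, ← hv, Function.iterate_succ_apply', theta]
    ring

theorem no_relation (A : PowerSeries ℚ) (a0 a1 a2 : ℚ)
    (hA : (1 + facSeries) * A.subst facSeries = (1 + facSeries) *
      (PowerSeries.C a0 + PowerSeries.C a1 * facSeries + PowerSeries.C a2 * facSeries ^ 2 + facSeries
        - PowerSeries.X) - 2 * facSeries ^ 2)
    (K : ℕ) (q : ℕ → Polynomial ℚ) (r : Polynomial ℚ) (hq : q (K + 1) ≠ 0)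
    (h : ∑ k ∈ Finset.range (K + 2), (q k : PowerSeries ℚ) * theta^[k] A = r) : False := by
  set u : Polynomial ℚ := (1 + Polynomial.X) * (Polynomial.C a0 + Polynomial.C a1 * Polynomial.X
    + Polynomial.C a2 * Polynomial.X ^ 2 + Polynomial.X) - Polynomial.C 2 * Polynomial.X ^ 2 with hu
  set U : PowerSeries ℚ := (1 + PowerSeries.X)⁻¹ * u with hUdef
  have hU : (1 + PowerSeries.X : PowerSeries ℚ) * U = (u : PowerSeries ℚ) := by
    rw [hUdef, ← mul_assoc, one_add_X_mul_inv, one_mul]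
  choose v hv using theta_rat U u hU
  have h1F : (1 + facSeries) ≠ 0 := by
    intro h0
    have := congrArg PowerSeries.constantCoeff h0
    have h00 : PowerSeries.constantCoeff facSeries = 0 := by
      rw [← PowerSeries.coeff_zero_eq_constantCoeff_apply]; simp [facSeries]
    simp [h00] at this
  have hs1 : (1 + PowerSeries.X : PowerSeries ℚ).subst facSeries = 1 + facSeries := by
    rw [← PowerSeries.coe_substAlgHom hasSubst_F, map_add, map_one, PowerSeries.substAlgHom_X]
  have hW : (U - A).subst facSeries = (PowerSeries.X : PowerSeries ℚ) := by
    apply mul_left_cancel₀ h1F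
    rw [PowerSeries.subst_sub hasSubst_F, mul_sub, hA]
    have := congrArg (PowerSeries.subst facSeries) hU
    rw [PowerSeries.subst_mul hasSubst_F, hs1, PowerSeries.subst_coe hasSubst_F] at this
    rw [this, hu]
    simp only [map_sub, map_mul, map_add, map_one, Polynomial.aeval_X, Polynomial.aeval_C, map_pow]
    have e : ∀ c : ℚ, algebraMap ℚ (PowerSeries ℚ) c = PowerSeries.C c := fun c => rfl
    simp only [e, map_ofNat]
    ring
  refine no_relation_W (U - A) hW K (fun k => q k * (1 + Polynomial.X) ^ (K + 2))
    (∑ k ∈ Finset.range (K + 2), q k * (1 + Polynomial.X) ^ (K + 1 - k) * v k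
      - r * (1 + Polynomial.X) ^ (K + 2)) ?_ ?_
  · refine mul_ne_zero hq (pow_ne_zero _ ?_)
    intro h0
    have := congrArg (Polynomial.eval 0) h0
    simp at this
  · rw [Polynomial.coe_sub, Polynomial.coe_mul, ← h]
    have e : (((∑ k ∈ Finset.range (K + 2), q k * (1 + Polynomial.X) ^ (K + 1 - k) * v k) : Polynomial ℚ)
       : PowerSeries ℚ) = ∑ k ∈ Finset.range (K + 2),
        (q k : PowerSeries ℚ) * (1 + PowerSeries.X) ^ (K + 2) * theta^[k] U := by
      rw [← Polynomial.coeToPowerSeries.ringHom_apply, map_sum]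
      apply Finset.sum_congr rfl
      intro k hk
      simp only [Polynomial.coeToPowerSeries.ringHom_apply, Polynomial.coe_mul, Polynomial.coe_pow,
        Polynomial.coe_add, Polynomial.coe_one, Polynomial.coe_X]
      rw [← hv, mul_assoc, ← mul_assoc (_ ^ _) (_ ^ _), ← pow_add, ← mul_assoc]
      congr 3
      simp at hk; omega
    rw [e, Finset.sum_mul, ← Finset.sum_sub_distrib]
    apply Finset.sum_congr rfl
    intro k hk
    rw [theta_iter_sub]
    simp only [Polynomial.coe_mul, Polynomial.coe_pow,
        Polynomial.coe_add, Polynomial.coe_one, Polynomial.coe_X]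
    ring

/-! ### from P-recursive sequences to differential equations -/

lemma coeff_theta_iter (A : PowerSeries ℚ) (k n : ℕ) :
    PowerSeries.coeff n (theta^[k] A) = (n : ℚ) ^ k * PowerSeries.coeff n A := by
  induction k with
  | zero => simp
  | succ k ih =>
    rw [Function.iterate_succ_apply', theta]
    rcases n with _ | n
    · simp
    · rw [PowerSeries.coeff_succ_X_mul, PowerSeries.coeff_derivative, ih]
      push_cast; ring

lemma exists_relation (a : ℕ → ℚ) (h : IsPRecursive a) :
    ∃ (K : ℕ) (q : ℕ → Polynomial ℚ) (r : Polynomial ℚ), q (K + 1) ≠ 0 ∧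
      ∑ k ∈ Finset.range (K + 2), (q k : PowerSeries ℚ) * theta^[k] (PowerSeries.mk a) = r := by
  classical
  obtain ⟨d, p, hpd, hp⟩ := h
  set A := PowerSeries.mk a with hA
  set t : ℕ → Polynomial ℚ := fun i =>
    (Polynomial.X * p i).comp (Polynomial.X - Polynomial.C (i : ℚ)) with ht
  set B := ∑ i ∈ Finset.range (d + 1), (t i).natDegree with hB
  set q : ℕ → Polynomial ℚ := fun k => ∑ i ∈ Finset.range (d + 1),
    Polynomial.X ^ (d - i) * Polynomial.C ((t i).coeff k) with hq
  have hdeg : ∀ i ∈ Finset.range (d + 1), (t i).natDegree ≤ B := fun i hi =>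
    Finset.single_le_sum (f := fun i => (t i).natDegree) (fun _ _ => Nat.zero_le _) hi
  have hqB : ∀ k, B < k → q k = 0 := by
    intro k hk
    rw [hq]
    apply Finset.sum_eq_zero
    intro i hi
    rw [Polynomial.coeff_eq_zero_of_natDegree_lt (lt_of_le_of_lt (hdeg i hi) hk)]
    simp
  have htd : (t d).natDegree = (p d).natDegree + 1 := by
    rw [ht]
    simp only
    rw [Polynomial.natDegree_comp, Polynomial.natDegree_X_sub_C, mul_one,
      Polynomial.natDegree_X_mul hpd]
  have hq1 : q (t d).natDegree ≠ 0 := by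
    intro h0
    have h1 := congrArg (fun f => Polynomial.coeff f 0) h0
    simp only [hq, Polynomial.finsetSum_coeff, Polynomial.coeff_zero] at h1
    rw [Finset.sum_eq_single d] at h1
    · simp at h1
      rw [h1] at htd
      simp at htd
    · intro i hi hid
      rw [Polynomial.coeff_X_pow_mul']
      simp at hi
      rw [if_neg (by omega)]
    · simp
  set T := Nat.findGreatest (fun k => q k ≠ 0) B with hT
  have hTle : (t d).natDegree ≤ T := Nat.le_findGreatest (hdeg d (by simp)) hq1
  have hTne : q T ≠ 0 := Nat.findGreatest_spec (P := fun k => q k ≠ 0) (hdeg d (by simp)) hq1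
  have hTgt : ∀ k, T < k → q k = 0 := by
    intro k hk
    rcases Nat.lt_or_ge B k with h | h
    · exact hqB k h
    · by_contra hne
      exact Nat.findGreatest_is_greatest hk h hne
  have hTB : T ≤ B := Nat.findGreatest_le _
  have hTpos : T - 1 + 1 = T := by omega
  set Z := ∑ k ∈ Finset.range (B + 1), (q k : PowerSeries ℚ) * theta^[k] A with hZ
  have hZeq : ∑ k ∈ Finset.range (T + 1), (q k : PowerSeries ℚ) * theta^[k] A = Z := by
    apply Finset.sum_subset
    · intro x; simp; omega
    · intro x _ hx
      rw [hTgt x (by simpa using hx)]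
      simp
  have hZ2 : Z = ∑ i ∈ Finset.range (d + 1), PowerSeries.X ^ (d - i) *
      PowerSeries.mk (fun n => (t i).eval (n : ℚ) * a n) := by
    have e1 : Z = ∑ k ∈ Finset.range (B + 1), ∑ i ∈ Finset.range (d + 1),
        PowerSeries.X ^ (d - i) * (PowerSeries.C ((t i).coeff k) * theta^[k] A) := by
      rw [hZ]
      apply Finset.sum_congr rfl
      intro k _
      rw [hq]
      simp only
      rw [← Polynomial.coeToPowerSeries.ringHom_apply, map_sum, Finset.sum_mul]
      apply Finset.sum_congr rfl
      intro i _
      simp only [Polynomial.coeToPowerSeries.ringHom_apply, Polynomial.coe_mul, Polynomial.coe_pow,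
        Polynomial.coe_X, Polynomial.coe_C]
      ring
    rw [e1, Finset.sum_comm]
    apply Finset.sum_congr rfl
    intro i hi
    rw [← Finset.mul_sum]
    congr 1
    ext n
    rw [map_sum, PowerSeries.coeff_mk,
      Polynomial.eval_eq_sum_range' (Nat.lt_succ_of_le (hdeg i hi)), Finset.sum_mul]
    apply Finset.sum_congr rfl
    intro k _
    rw [PowerSeries.coeff_C_mul, coeff_theta_iter, hA, PowerSeries.coeff_mk]
    ring
  refine ⟨T - 1, q, PowerSeries.trunc (d + 1) Z, by rw [hTpos]; exact hTne, ?_⟩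
  rw [show T - 1 + 2 = T + 1 by omega, hZeq]
  ext n
  rw [Polynomial.coeff_coe, PowerSeries.coeff_trunc]
  split_ifs with hn
  · rfl
  · obtain ⟨m, rfl⟩ : ∃ m, n = m + 1 + d := ⟨n - d - 1, by omega⟩
    rw [hZ2, map_sum]
    have hpm := hp (m + 1) (by omega)
    have : ∀ i ∈ Finset.range (d + 1), PowerSeries.coeff (m + 1 + d) (PowerSeries.X ^ (d - i) *
      PowerSeries.mk (fun n => (t i).eval (n : ℚ) * a n)) =
      ((m + 1 : ℕ) : ℚ) * ((p i).eval ((m + 1 : ℕ) : ℚ) * a (m + 1 + i)) := by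
      intro i hi
      simp at hi
      rw [PowerSeries.coeff_X_pow_mul', if_pos (by omega), PowerSeries.coeff_mk,
        show m + 1 + d - (d - i) = m + 1 + i by omega, ht]
      simp
      ring
    rw [Finset.sum_congr rfl this, ← Finset.mul_sum, hpm, mul_zero]

/-! ### combinatorics: congruences of permutations -/

/-- blocks, as sets -/
def IsBlk {n : ℕ} (π : Equiv.Perm (Fin n)) (B : Set (Fin n)) : Prop :=
  B.OrdConnected ∧ (π '' B).OrdConnected

/-- `c` is the quotient map of a block decomposition of `π` with quotient `σ`. -/
def Cong {n m : ℕ} (π : Equiv.Perm (Fin n)) (σ : Equiv.Perm (Fin m)) (c : Fin n → Fin m) : Prop :=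
  Monotone c ∧ Function.Surjective c ∧ Monotone (σ ∘ c ∘ π.symm)

lemma exists_Icc_of_ordConnected {n : ℕ} (B : Finset (Fin n)) (hB : B.Nonempty)
    (h : (B : Set (Fin n)).OrdConnected) : ∃ i j, B = Finset.Icc i j := by
  refine ⟨B.min' hB, B.max' hB, ?_⟩
  ext x
  rw [Finset.mem_Icc]
  constructor
  · intro hx; exact ⟨B.min'_le x hx, B.le_max' x hx⟩
  · intro hx
    exact h.out (B.min'_mem hB) (B.max'_mem hB) hx

lemma isSimplePerm_iff {n : ℕ} (π : Equiv.Perm (Fin n)) :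
    IsSimplePerm π ↔ ∀ B : Set (Fin n), IsBlk π B → B.Subsingleton ∨ B = Set.univ := by
  classical
  constructor
  · intro h B hB
    rcases B.eq_empty_or_nonempty with h0 | hne
    · left; rw [h0]; exact Set.subsingleton_empty
    obtain ⟨hB1, hB2⟩ := hB
    have hfne : B.toFinset.Nonempty := by simpa using hne
    have := h B.toFinset ⟨hfne, exists_Icc_of_ordConnected _ hfne (by simpa using hB1),
      exists_Icc_of_ordConnected _ (hfne.image _) (by simpa using hB2)⟩
    rcases this with h1 | h1
    · left
      obtain ⟨x, hx⟩ := Finset.card_eq_one.mp h1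
      intro a ha b hb
      have ha' : a ∈ B.toFinset := by simpa using ha
      have hb' : b ∈ B.toFinset := by simpa using hb
      rw [hx] at ha' hb'
      simp at ha' hb'
      rw [ha', hb']
    · right
      simpa using h1
  · rintro h B ⟨hne, ⟨i, j, hij⟩, ⟨a, b, hab⟩⟩
    have hb : IsBlk π (B : Set (Fin n)) := by
      constructor
      · rw [hij, Finset.coe_Icc]; exact Set.ordConnected_Icc
      · rw [← Finset.coe_image, hab, Finset.coe_Icc]; exact Set.ordConnected_Icc
    rcases h _ hb with h1 | h1
    · left
      exact le_antisymm (Finset.card_le_one.mpr fun a ha b hb => h1 ha hb) hne.card_pos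
    · right
      exact_mod_cast h1

lemma ordConnected_image_of_mono_surj {α β : Type*} [LinearOrder α] [LinearOrder β] {f : α → β}
    (hf : Monotone f) (hs : Function.Surjective f) {C : Set α} (hC : C.OrdConnected) :
    (f '' C).OrdConnected := by
  constructor
  rintro _ ⟨a, ha, rfl⟩ _ ⟨b, hb, rfl⟩ y ⟨hy1, hy2⟩
  obtain ⟨z, rfl⟩ := hs y
  rcases le_total z a with h | h
  · exact ⟨a, ha, le_antisymm hy1 (hf h)⟩
  rcases le_total b z with h' | h'
  · exact ⟨b, hb, le_antisymm (hf h') hy2⟩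
  exact ⟨z, hC.out ha hb ⟨h, h'⟩, rfl⟩

lemma ordConnected_preimage_of_mono {α β : Type*} [LinearOrder α] [LinearOrder β] {f : α → β}
    (hf : Monotone f) {C : Set β} (hC : C.OrdConnected) :
    (f ⁻¹' C).OrdConnected := by
  constructor
  intro a ha b hb y hy
  exact hC.out ha hb ⟨hf hy.1, hf hy.2⟩

lemma Cong.surj' {n m : ℕ} {π : Equiv.Perm (Fin n)} {σ : Equiv.Perm (Fin m)} {c : Fin n → Fin m}
    (h : Cong π σ c) : Function.Surjective (σ ∘ c ∘ π.symm) :=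
  σ.surjective.comp (h.2.1.comp π.symm.surjective)

lemma Cong.blk_image {n m : ℕ} {π : Equiv.Perm (Fin n)} {σ : Equiv.Perm (Fin m)} {c : Fin n → Fin m}
    (h : Cong π σ c) {C : Set (Fin n)} (hC : IsBlk π C) : IsBlk σ (c '' C) := by
  refine ⟨ordConnected_image_of_mono_surj h.1 h.2.1 hC.1, ?_⟩
  have : σ '' (c '' C) = (σ ∘ c ∘ π.symm) '' (π '' C) := by
    simp only [Set.image_image, Function.comp, Equiv.symm_apply_apply]
  rw [this]
  exact ordConnected_image_of_mono_surj h.2.2 h.surj' hC.2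

lemma Cong.blk_preimage {n m : ℕ} {π : Equiv.Perm (Fin n)} {σ : Equiv.Perm (Fin m)}
    {c : Fin n → Fin m}
    (h : Cong π σ c) {B : Set (Fin m)} (hB : IsBlk σ B) : IsBlk π (c ⁻¹' B) := by
  refine ⟨ordConnected_preimage_of_mono h.1 hB.1, ?_⟩
  have : π '' (c ⁻¹' B) = (σ ∘ c ∘ π.symm) ⁻¹' (σ '' B) := by
    ext x
    simp
  rw [this]
  exact ordConnected_preimage_of_mono h.2.2 hB.2

lemma ordConnected_notMem {α : Type*} [LinearOrder α] {C : Set α} (hC : C.OrdConnected) {x : α}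
    (hx : x ∉ C) : (∀ y ∈ C, x ≤ y) ∨ (∀ y ∈ C, y ≤ x) := by
  by_contra h
  push Not at h
  obtain ⟨⟨a, ha, ha'⟩, ⟨b, hb, hb'⟩⟩ := h
  exact hx (hC.out ha hb ⟨ha'.le, hb'.le⟩)

lemma ordConnected_compl_corner {α : Type*} [LinearOrder α] {x : α}
    (h : (∀ y, x ≤ y) ∨ (∀ y, y ≤ x)) : ({x}ᶜ : Set α).OrdConnected := by
  constructor
  intro a ha b hb y hy hyx
  simp only [Set.mem_compl_iff, Set.mem_singleton_iff] at ha hb hyx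
  subst hyx
  rcases h with h | h
  · exact ha (le_antisymm hy.1 (h a))
  · exact hb (le_antisymm (h b) hy.2)

/-- proper blocks collapse under a simple quotient of length at least three -/
lemma Cong.image_subsingleton {n m : ℕ} {π : Equiv.Perm (Fin n)} {σ : Equiv.Perm (Fin m)}
    {c : Fin n → Fin m} (h : Cong π σ c) (hm : 3 ≤ m) (hσ : IsSimplePerm σ) {C : Set (Fin n)}
    (hC : IsBlk π C) (hCu : C ≠ Set.univ) : (c '' C).Subsingleton := by
  rw [isSimplePerm_iff] at hσ
  rcases hσ _ (h.blk_image hC) with h1 | h1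
  · exact h1
  exfalso
  obtain ⟨x, hx⟩ := (Set.ne_univ_iff_exists_notMem _).mp hCu
  have hcor1 : (∀ y, c x ≤ y) ∨ (∀ y, y ≤ c x) := by
    have hsur : ∀ y, ∃ z ∈ C, c z = y := fun y => by
      have : y ∈ c '' C := by rw [h1]; trivial
      exact this
    rcases ordConnected_notMem hC.1 hx with h2 | h2
    · left
      intro y
      obtain ⟨z, hz, rfl⟩ := hsur y
      exact h.1 (h2 z hz)
    · right
      intro y
      obtain ⟨z, hz, rfl⟩ := hsur y
      exact h.1 (h2 z hz)
  have hcor2 : (∀ y, σ (c x) ≤ y) ∨ (∀ y, y ≤ σ (c x)) := by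
    have hsur : ∀ y, ∃ z ∈ C, σ (c z) = y := fun y => by
      have : σ.symm y ∈ c '' C := by rw [h1]; trivial
      obtain ⟨z, hz, hz'⟩ := this
      exact ⟨z, hz, by rw [hz']; simp⟩
    have hx' : π x ∉ π '' C := by
      rintro ⟨y, hy, hyx⟩
      exact hx (π.injective hyx ▸ hy)
    have hd : ∀ {a b}, π a ≤ π b → σ (c a) ≤ σ (c b) := fun {a b} hab => by
      simpa using h.2.2 hab
    rcases ordConnected_notMem hC.2 hx' with h2 | h2
    · left
      intro y
      obtain ⟨z, hz, rfl⟩ := hsur y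
      exact hd (h2 (π z) ⟨z, hz, rfl⟩)
    · right
      intro y
      obtain ⟨z, hz, rfl⟩ := hsur y
      exact hd (h2 (π z) ⟨z, hz, rfl⟩)
  have hblk : IsBlk σ ({c x}ᶜ : Set (Fin m)) := by
    refine ⟨ordConnected_compl_corner hcor1, ?_⟩
    rw [Set.image_compl_eq σ.bijective, Set.image_singleton]
    exact ordConnected_compl_corner hcor2
  rcases hσ _ hblk with h3 | h3
  · have hcard : 1 < (Finset.univ.erase (c x)).card := by
      rw [Finset.card_erase_of_mem (Finset.mem_univ _), Finset.card_univ, Fintype.card_fin]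
      omega
    obtain ⟨a, ha, b, hb, hab⟩ := Finset.one_lt_card.mp hcard
    exact hab (h3 (by simpa using ha) (by simpa using hb))
  · have : c x ∈ ({c x}ᶜ : Set (Fin m)) := by rw [h3]; trivial
    simp at this

/-! uniqueness -/

lemma strictMono_of_ker {n m m' : ℕ} {c : Fin n → Fin m} {c' : Fin n → Fin m'}
    (hc : Monotone c) (hcs : Function.Surjective c) (hc' : Monotone c')
    (hcs' : Function.Surjective c') (hk : ∀ x y, c x = c y ↔ c' x = c' y) :
    ∃ g : Fin m ≃o Fin m', ∀ x, g (c x) = c' x := by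
  have hg : ∀ x, c' (Function.surjInv hcs (c x)) = c' x := fun x =>
    (hk _ _).mp (Function.surjInv_eq hcs (c x))
  have hsm : StrictMono (fun i => c' (Function.surjInv hcs i)) := by
    intro i j hij
    obtain ⟨x, rfl⟩ := hcs i
    obtain ⟨y, rfl⟩ := hcs j
    simp only [hg]
    have hxy : x < y := by
      by_contra hcon
      exact absurd (hc (not_lt.mp hcon)) (not_le.mpr hij)
    exact lt_of_le_of_ne (hc' hxy.le) fun he => hij.ne ((hk _ _).mpr he)
  have hsu : Function.Surjective (fun i => c' (Function.surjInv hcs i)) := by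
    intro j
    obtain ⟨x, rfl⟩ := hcs' j
    exact ⟨c x, hg x⟩
  exact ⟨hsm.orderIsoOfSurjective _ hsu, hg⟩

lemma mono_surj_unique {n m : ℕ} {c c' : Fin n → Fin m}
    (hc : Monotone c) (hcs : Function.Surjective c) (hc' : Monotone c')
    (hcs' : Function.Surjective c') (hk : ∀ x y, c x = c y ↔ c' x = c' y) : c = c' := by
  obtain ⟨g, hg⟩ := strictMono_of_ker hc hcs hc' hcs' hk
  have : g = OrderIso.refl _ := Subsingleton.elim _ _
  funext x
  rw [← hg, this]; rfl

lemma Cong.ker_le {n m m' : ℕ} {π : Equiv.Perm (Fin n)} {σ : Equiv.Perm (Fin m)}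
    {c : Fin n → Fin m} {σ' : Equiv.Perm (Fin m')} {c' : Fin n → Fin m'}
    (h : Cong π σ c) (hm : 3 ≤ m)
    (h' : Cong π σ' c') (hm' : 3 ≤ m') (hσ' : IsSimplePerm σ') (x y : Fin n) (hxy : c x = c y) :
    c' x = c' y := by
  have hb : IsBlk σ ({c x} : Set (Fin m)) :=
    ⟨Set.ordConnected_singleton, by rw [Set.image_singleton]; exact Set.ordConnected_singleton⟩
  have hb2 := h.blk_preimage hb
  have hne : c ⁻¹' {c x} ≠ Set.univ := by
    intro hu
    have hall : ∀ i, i = c x := fun i => by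
      obtain ⟨z, rfl⟩ := h.2.1 i
      have : z ∈ c ⁻¹' {c x} := by rw [hu]; trivial
      exact this
    have h0 := hall ⟨0, by omega⟩
    have h1 := hall ⟨1, by omega⟩
    rw [← h1] at h0
    simp at h0
  exact h'.image_subsingleton hm' hσ' hb2 hne ⟨x, rfl, rfl⟩ ⟨y, hxy.symm, rfl⟩

lemma Cong.unique {n m m' : ℕ} {π : Equiv.Perm (Fin n)} {σ : Equiv.Perm (Fin m)}
    {c : Fin n → Fin m} {σ' : Equiv.Perm (Fin m')} {c' : Fin n → Fin m'}
    (h : Cong π σ c) (hm : 3 ≤ m) (hσ : IsSimplePerm σ)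
    (h' : Cong π σ' c') (hm' : 3 ≤ m') (hσ' : IsSimplePerm σ') :
    (⟨m, σ, c⟩ : Σ m : ℕ, Equiv.Perm (Fin m) × (Fin n → Fin m)) = ⟨m', σ', c'⟩ := by
  have hk : ∀ x y, c x = c y ↔ c' x = c' y := fun x y =>
    ⟨h.ker_le hm h' hm' hσ' x y, h'.ker_le hm' h hm hσ x y⟩
  obtain ⟨g, -⟩ := strictMono_of_ker h.1 h.2.1 h'.1 h'.2.1 hk
  have hmm : m = m' := by simpa using Fintype.card_congr g.toEquiv
  subst hmm
  have hcc : c = c' := mono_surj_unique h.1 h.2.1 h'.1 h'.2.1 hk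
  subst hcc
  have hd : σ ∘ c ∘ π.symm = σ' ∘ c ∘ π.symm :=
    mono_surj_unique h.2.2 h.surj' h'.2.2 h'.surj' (fun x y => by simp)
  have : σ = σ' := by
    ext1 i
    obtain ⟨x, rfl⟩ := h.2.1 i
    simpa using congrFun hd (π x)
  rw [this]

/-! existence -/

lemma exists_sigma {n m : ℕ} (π : Equiv.Perm (Fin n)) {c : Fin n → Fin m} (hc : Monotone c)
    (hcs : Function.Surjective c) (hb : ∀ x, (π '' {y | c y = c x}).OrdConnected) :
    ∃ σ : Equiv.Perm (Fin m), Cong π σ c := by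
  set f := c ∘ π.symm with hf
  have hfs : Function.Surjective f := hcs.comp π.symm.surjective
  set s := Function.surjInv hfs with hs
  have hfx : ∀ i, f (s i) = i := Function.surjInv_eq hfs
  have hconn : ∀ x y z, f x = f z → x ≤ y → y ≤ z → f y = f x := by
    intro x y z hxz hxy hyz
    have hmem : ∀ w, f w = f x → w ∈ π '' {y | c y = c (π.symm x)} := fun w hw =>
      ⟨π.symm w, hw, by simp⟩
    obtain ⟨w, hw, rfl⟩ := (hb (π.symm x)).out (hmem x rfl) (hmem z hxz.symm) ⟨hxy, hyz⟩
    simpa [hf] using hw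
  have hsm : StrictMono (s ∘ Tuple.sort s) :=
    (Tuple.monotone_sort s).strictMono_of_injective
      ((Function.injective_surjInv hfs).comp (Tuple.sort s).injective)
  refine ⟨(Tuple.sort s).symm, hc, hcs, ?_⟩
  intro x y hxy
  change (Tuple.sort s).symm (f x) ≤ (Tuple.sort s).symm (f y)
  rw [← hsm.le_iff_le]
  simp only [Function.comp, Equiv.apply_symm_apply]
  by_contra hcon
  push Not at hcon
  have hne : f x ≠ f y := fun h => by rw [h] at hcon; exact lt_irrefl _ hcon
  rcases le_total (s (f y)) x with h1 | h1
  · exact hne ((hconn _ _ _ (hfx _) h1 hxy).trans (hfx _))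
  · have := hconn x (s (f y)) (s (f x)) (hfx _).symm h1 hcon.le
    rw [hfx] at this
    exact hne this.symm

lemma exists_compress {n k : ℕ} (g : Fin n → Fin k) (hg : Monotone g) :
    ∃ c : Fin n → Fin (Finset.univ.image g).card, Monotone c ∧ Function.Surjective c ∧
      ∀ x y, c x = c y ↔ g x = g y := by
  set e := (Finset.univ.image g).orderIsoOfFin rfl with he
  refine ⟨fun x => e.symm ⟨g x, by simp⟩, ?_, ?_, ?_⟩
  · intro x y hxy
    exact e.symm.monotone (hg hxy)
  · intro i
    have h1 := (e i).2
    simp only [Finset.mem_image, Finset.mem_univ, true_and] at h1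
    obtain ⟨x, hx⟩ := h1
    refine ⟨x, ?_⟩
    rw [OrderIso.symm_apply_eq]
    exact Subtype.ext hx
  · intro x y
    simp

lemma exists_collapse {m : ℕ} {σ : Equiv.Perm (Fin m)} (hσ : ¬ IsSimplePerm σ) :
    ∃ g : Fin m → Fin m, Monotone g ∧ (∀ x, IsBlk σ {y | g y = g x}) ∧
      (∃ x y, x ≠ y ∧ g x = g y) ∧ ∃ x y, g x ≠ g y := by
  classical
  rw [isSimplePerm_iff] at hσ
  push Not at hσ
  obtain ⟨B, hB, hns, hnu⟩ := hσ
  obtain ⟨b1, hb1, b2, hb2, hb12⟩ := hns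
  obtain ⟨x0, hx0⟩ := (Set.ne_univ_iff_exists_notMem _).mp hnu
  have hne : B.toFinset.Nonempty := ⟨b1, by simpa using hb1⟩
  set b := B.toFinset.min' hne with hb
  have hbB : b ∈ B := by simpa using B.toFinset.min'_mem hne
  have hbmin : ∀ x ∈ B, b ≤ x := fun x hx => B.toFinset.min'_le x (by simpa using hx)
  refine ⟨fun x => if x ∈ B then b else x, ?_, ?_, ⟨b1, b2, hb12, ?_⟩, ⟨x0, b, ?_⟩⟩
  · intro x y hxy
    simp only
    split_ifs with h1 h2 h2
    · exact le_rfl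
    · exact (hbmin x h1).trans hxy
    · by_contra hcon
      push Not at hcon
      exact h1 (hB.1.out hbB h2 ⟨hcon.le, hxy⟩)
    · exact hxy
  · intro x
    by_cases hx : x ∈ B
    · have : {y | (if y ∈ B then b else y) = if x ∈ B then b else x} = B := by
        ext y
        simp only [hx, if_true, Set.mem_setOf_eq]
        split_ifs with h
        · simp [h]
        · simp only [h, iff_false]
          intro hyb; exact h (hyb ▸ hbB)
      rw [this]; exact hB
    · have : {y | (if y ∈ B then b else y) = if x ∈ B then b else x} = {x} := by
        ext y
        simp only [hx, if_false, Set.mem_setOf_eq, Set.mem_singleton_iff]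
        split_ifs with h
        · constructor
          · intro h2; exact absurd (h2 ▸ hbB) hx
          · intro h2; exact absurd (h2 ▸ h) hx
        · rfl
      rw [this]
      exact ⟨Set.ordConnected_singleton, by rw [Set.image_singleton]; exact Set.ordConnected_singleton⟩
  · simp [hb1, hb2]
  · simp only [hx0, hbB, if_true, if_false]
    intro h; exact hx0 (h ▸ hbB)

lemma exists_simple_quotient {n : ℕ} (hn : 2 ≤ n) (π : Equiv.Perm (Fin n)) :
    ∃ m, 2 ≤ m ∧ ∃ (σ : Equiv.Perm (Fin m)) (c : Fin n → Fin m), IsSimplePerm σ ∧ Cong π σ c := by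
  classical
  have hex : ∃ m, 2 ≤ m ∧ ∃ (σ : Equiv.Perm (Fin m)) (c : Fin n → Fin m), Cong π σ c :=
    ⟨n, hn, π, id, monotone_id, Function.surjective_id, by
      intro x y hxy; simpa using hxy⟩
  obtain ⟨m, ⟨hm, σ, c, h⟩, hmin⟩ : ∃ m, (2 ≤ m ∧ ∃ (σ : Equiv.Perm (Fin m))
      (c : Fin n → Fin m), Cong π σ c) ∧ ∀ k < m, ¬ (2 ≤ k ∧ ∃ (σ : Equiv.Perm (Fin k))
      (c : Fin n → Fin k), Cong π σ c) :=
    ⟨Nat.find hex, Nat.find_spec hex, fun k hk => Nat.find_min hex hk⟩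
  refine ⟨m, hm, σ, c, ?_, h⟩
  by_contra hns
  obtain ⟨g, hg, hgb, ⟨x1, x2, hx12, hgx⟩, ⟨y1, y2, hy⟩⟩ := exists_collapse hns
  obtain ⟨c', hc', hcs', hck⟩ := exists_compress (g ∘ c) (hg.comp h.1)
  have himg : Finset.univ.image (g ∘ c) = Finset.univ.image g := by
    rw [← Finset.image_image, Finset.image_univ_of_surjective h.2.1]
  have hlt : (Finset.univ.image (g ∘ c)).card < m := by
    have : (Finset.univ.image (g ∘ c)).card ≤ (Finset.univ.erase x1 : Finset (Fin m)).card := by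
      rw [himg]
      have : Finset.univ.image g ⊆ (Finset.univ.erase x1).image g := by
        intro z hz
        simp only [Finset.mem_image, Finset.mem_univ, true_and] at hz
        obtain ⟨w, rfl⟩ := hz
        by_cases hw : w = x1
        · subst hw
          exact Finset.mem_image.mpr ⟨x2, by simp [hx12.symm], hgx.symm⟩
        · exact Finset.mem_image.mpr ⟨w, by simp [hw], rfl⟩
      exact (Finset.card_le_card this).trans Finset.card_image_le
    rw [Finset.card_erase_of_mem (Finset.mem_univ _), Finset.card_univ, Fintype.card_fin] at this
    omega
  have hge : 2 ≤ (Finset.univ.image (g ∘ c)).card := by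
    rw [himg]
    exact Finset.one_lt_card.mpr ⟨g y1, by simp, g y2, by simp, hy⟩
  obtain ⟨σ', hσ'⟩ := exists_sigma π hc' hcs' (fun x => by
    have : {y | c' y = c' x} = c ⁻¹' {z | g z = g (c x)} := by
      ext y; simp [hck]
    rw [this]
    exact (h.blk_preimage (hgb (c x))).2)
  exact hmin _ hlt ⟨hge, σ', c', hσ'⟩

/-! ### sum and skew decompositions -/

/-- `π` maps a proper nonempty initial segment to itself. -/
def SumDec {n : ℕ} (π : Equiv.Perm (Fin n)) : Prop :=
  ∃ k, 0 < k ∧ k < n ∧ ∀ i : Fin n, (i : ℕ) < k → (π i : ℕ) < k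

/-- `π` maps a proper nonempty initial segment to a final segment. -/
def SkewDec {n : ℕ} (π : Equiv.Perm (Fin n)) : Prop := SumDec (π.trans Fin.revPerm)

lemma image_seg {n k : ℕ} (π : Equiv.Perm (Fin n))
    (h : ∀ i : Fin n, (i : ℕ) < k → (π i : ℕ) < k) :
    π '' ({i : Fin n | (i : ℕ) < k} : Set (Fin n)) = {i : Fin n | (i : ℕ) < k} := by
  apply Set.eq_of_subset_of_ncard_le
  · rintro _ ⟨i, hi, rfl⟩; exact h i hi
  · rw [Set.ncard_image_of_injective _ π.injective]
  · exact Set.toFinite _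

lemma ordConnected_seg {n k : ℕ} : ({i : Fin n | (i : ℕ) < k} : Set (Fin n)).OrdConnected := by
  constructor
  intro a ha b hb y hy
  have : (y : ℕ) ≤ b := hy.2
  have hb' : (b : ℕ) < k := hb
  exact lt_of_le_of_lt this hb'

lemma ordConnected_seg_compl {n k : ℕ} : ({i : Fin n | (i : ℕ) < k}ᶜ : Set (Fin n)).OrdConnected := by
  constructor
  intro a ha b hb y hy hyk
  have : (a : ℕ) ≤ y := hy.1
  have hb' : (y : ℕ) < k := hyk
  exact ha (lt_of_le_of_lt this hb')

lemma SumDec.blk {n : ℕ} {π : Equiv.Perm (Fin n)} (h : SumDec π) :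
    ∃ C : Set (Fin n), IsBlk π C ∧ IsBlk π Cᶜ ∧ C ≠ Set.univ ∧ Cᶜ ≠ Set.univ := by
  obtain ⟨k, hk0, hkn, h⟩ := h
  refine ⟨{i : Fin n | (i : ℕ) < k}, ⟨ordConnected_seg, ?_⟩, ⟨ordConnected_seg_compl, ?_⟩, ?_, ?_⟩
  · rw [image_seg π h]; exact ordConnected_seg
  · rw [Set.image_compl_eq π.bijective, image_seg π h]; exact ordConnected_seg_compl
  · rw [Set.ne_univ_iff_exists_notMem]
    exact ⟨⟨k, hkn⟩, by simp⟩
  · rw [Set.ne_univ_iff_exists_notMem]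
    exact ⟨⟨0, by omega⟩, by simpa using hk0.ne'⟩

lemma IsBlk.of_rev {n : ℕ} {π : Equiv.Perm (Fin n)} {B : Set (Fin n)}
    (h : IsBlk (π.trans Fin.revPerm) B) : IsBlk π B := by
  refine ⟨h.1, ?_⟩
  have : π '' B = Fin.rev ⁻¹' ((π.trans Fin.revPerm) '' B) := by
    ext x
    simp only [Set.mem_image, Set.mem_preimage, Equiv.trans_apply, Fin.revPerm_apply,
      Fin.rev_inj]
  rw [this]
  exact h.2.preimage_anti Fin.rev_anti

lemma SkewDec.blk {n : ℕ} {π : Equiv.Perm (Fin n)} (h : SkewDec π) :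
    ∃ C : Set (Fin n), IsBlk π C ∧ IsBlk π Cᶜ ∧ C ≠ Set.univ ∧ Cᶜ ≠ Set.univ := by
  obtain ⟨C, h1, h2, h3, h4⟩ := SumDec.blk h
  exact ⟨C, h1.of_rev, h2.of_rev, h3, h4⟩

lemma no_cong_of_dec {n m : ℕ} {π : Equiv.Perm (Fin n)} {σ : Equiv.Perm (Fin m)}
    {c : Fin n → Fin m} (hd : SumDec π ∨ SkewDec π) (h : Cong π σ c) (hm : 3 ≤ m)
    (hσ : IsSimplePerm σ) : False := by
  obtain ⟨C, h1, h2, h3, h4⟩ : ∃ C : Set (Fin n), IsBlk π C ∧ IsBlk π Cᶜ ∧ C ≠ Set.univ ∧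
    Cᶜ ≠ Set.univ := hd.elim SumDec.blk SkewDec.blk
  have k1 := h.image_subsingleton hm hσ h1 h3
  have k2 := h.image_subsingleton hm hσ h2 h4
  have hu : c '' C ∪ c '' Cᶜ = Set.univ := by
    rw [← Set.image_union, Set.union_compl_self, Set.image_univ, h.2.1.range_eq]
  have := Set.ncard_union_le (c '' C) (c '' Cᶜ)
  rw [hu, Set.ncard_univ, Nat.card_fin] at this
  have a1 := (Set.ncard_le_one_iff_subsingleton (s := c '' C)).mpr k1
  have a2 := (Set.ncard_le_one_iff_subsingleton (s := c '' Cᶜ)).mpr k2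
  omega

lemma sum_skew_disjoint {n : ℕ} {π : Equiv.Perm (Fin n)} (h : SumDec π) (h' : SkewDec π) :
    False := by
  obtain ⟨k, hk0, hkn, h⟩ := h
  obtain ⟨l, hl0, hln, h'⟩ := h'
  have i1 := image_seg _ h
  have i2 := image_seg _ h'
  have z1 := h ⟨0, by omega⟩ hk0
  have z2 := h' ⟨0, by omega⟩ hl0
  -- the first value is small and large, the last value too
  by_cases hkl : k ≤ l
  · have h0 : ((π.symm ⟨0, by omega⟩ : Fin n) : ℕ) < k := by
      have : (⟨0, by omega⟩ : Fin n) ∈ π '' ({i : Fin n | (i : ℕ) < k} : Set (Fin n)) := by rw [i1]; exact hk0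
      obtain ⟨j, hj, hj'⟩ := this
      rw [← hj']; simpa using hj
    have := h' (π.symm ⟨0, by omega⟩) (by omega)
    simp only [Equiv.trans_apply, Fin.revPerm_apply, Fin.val_rev, Equiv.apply_symm_apply] at this
    omega
  · have h1 := h ⟨k - 1, by omega⟩ (by simp; omega)
    have h0 : ((π.symm ⟨n - 1, by omega⟩ : Fin n) : ℕ) < l := by
      have : (⟨0, by omega⟩ : Fin n) ∈ (π.trans Fin.revPerm) '' ({i : Fin n | (i : ℕ) < l} : Set (Fin n)) := by
        rw [i2]; exact hl0
      obtain ⟨j, hj, hj'⟩ := this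
      have : π j = ⟨n - 1, by omega⟩ := by
        apply Fin.ext
        have := congrArg Fin.val hj'
        simp only [Equiv.trans_apply, Fin.revPerm_apply, Fin.val_rev] at this
        have := (π j).isLt
        simp only
        omega
      rw [← this]; simpa using hj
    have := h (π.symm ⟨n - 1, by omega⟩) (by omega)
    simp only [Equiv.apply_symm_apply] at this
    omega

lemma seg_of_lower {n : ℕ} (S : Finset (Fin n)) (h : ∀ i j : Fin n, i ≤ j → j ∈ S → i ∈ S)
    (i : Fin n) : i ∈ S ↔ (i : ℕ) < S.card := by
  constructor
  · intro hi
    have : Finset.Iic i ⊆ S := fun x hx => h x i (Finset.mem_Iic.mp hx) hi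
    have := Finset.card_le_card this
    rw [Fin.card_Iic] at this
    omega
  · intro hi
    by_contra hn
    have : S ⊆ Finset.Iio i := by
      intro x hx
      rw [Finset.mem_Iio]
      by_contra hxi
      exact hn (h i x (not_lt.mp hxi) hx)
    have := Finset.card_le_card this
    rw [Fin.card_Iio] at this
    omega

lemma sumDec_of_two {n : ℕ} {π : Equiv.Perm (Fin n)} {c : Fin n → Fin 2} (hc : Monotone c)
    (hs : Function.Surjective c) (hm : Monotone (c ∘ π.symm)) : SumDec π := by
  classical
  set S := Finset.univ.filter (fun i => c i = 0) with hS
  set S' := Finset.univ.filter (fun i => c (π.symm i) = 0) with hS'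
  have e0 : ∀ a b : Fin 2, a ≤ b → b = 0 → a = 0 := by decide
  have h1 := seg_of_lower S (fun i j hij hj => by
    simp only [hS, Finset.mem_filter, Finset.mem_univ, true_and] at hj ⊢
    exact e0 _ _ (hc hij) hj)
  have h2 := seg_of_lower S' (fun i j hij hj => by
    simp only [hS', Finset.mem_filter, Finset.mem_univ, true_and] at hj ⊢
    exact e0 _ _ (hm hij) hj)
  have hcard : S'.card = S.card := by
    have : S' = S.map π.toEmbedding := by
      ext x
      simp [hS, hS', Finset.mem_map_equiv]
    rw [this, Finset.card_map]
  obtain ⟨a, ha⟩ := hs 0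
  obtain ⟨b, hb⟩ := hs 1
  refine ⟨S.card, Finset.card_pos.mpr ⟨a, by simp [hS, ha]⟩, ?_, ?_⟩
  · have : S.card < (Finset.univ : Finset (Fin n)).card := Finset.card_lt_card (by
      rw [Finset.ssubset_univ_iff]
      intro h
      have : b ∈ S := by rw [h]; simp
      simp [hS, hb] at this)
    simpa using this
  · intro i hi
    rw [← hcard, ← h2]
    rw [← h1] at hi
    simpa [hS, hS'] using hi

lemma dec_of_two {n : ℕ} {π : Equiv.Perm (Fin n)} {σ : Equiv.Perm (Fin 2)} {c : Fin n → Fin 2}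
    (h : Cong π σ c) : SumDec π ∨ SkewDec π := by
  have hσ : (∀ x, σ x = x) ∨ ∀ x, σ x = Fin.rev x := by
    clear h
    revert σ
    decide
  rcases hσ with hσ | hσ
  · left
    refine sumDec_of_two h.1 h.2.1 ?_
    intro x y hxy
    have := h.2.2 hxy
    simpa [hσ] using this
  · right
    refine sumDec_of_two h.1 h.2.1 ?_
    intro x y hxy
    have := h.2.2 (Fin.rev_anti hxy)
    simp only [Function.comp, hσ, Fin.rev_le_rev] at this
    simpa using this

/-- substitution decomposition -/
lemma exists_cong {n : ℕ} (hn : 2 ≤ n) (π : Equiv.Perm (Fin n)) (h1 : ¬ SumDec π)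
    (h2 : ¬ SkewDec π) :
    ∃ m, 3 ≤ m ∧ ∃ (σ : Equiv.Perm (Fin m)) (c : Fin n → Fin m), IsSimplePerm σ ∧ Cong π σ c := by
  obtain ⟨m, hm, σ, c, hσ, h⟩ := exists_simple_quotient hn π
  rcases hm.eq_or_lt with h3 | h3
  · subst h3
    exact absurd (dec_of_two h) (by tauto)
  · exact ⟨m, h3, σ, c, hσ, h⟩

/-! ### counting -/

lemma card_mono_comp {n m : ℕ} (f : Fin n → Fin m) :
    Nat.card {τ : Equiv.Perm (Fin n) // Monotone (f ∘ τ)} =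
      ∏ i, (Fintype.card {a // f a = i}).factorial := by
  classical
  rw [← DomMulAct.stabilizer_card f, ← Nat.card_eq_fintype_card]
  refine Nat.card_congr ((Equiv.mulRight (Tuple.sort f)⁻¹).subtypeEquiv ?_)
  intro τ
  rw [← Tuple.comp_sort_eq_comp_iff_monotone]
  simp only [Equiv.coe_mulRight]
  constructor
  · intro h
    have : f ∘ (τ * (Tuple.sort f)⁻¹) = (f ∘ τ) ∘ ((Tuple.sort f)⁻¹ : Equiv.Perm (Fin n)) := rfl
    rw [this, h]
    funext x; simp
  · intro h
    funext x
    have := congrFun h (Tuple.sort f x)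
    simpa using this

lemma mono_eq_of_card {n m : ℕ} {c c' : Fin n → Fin m} (hc : Monotone c) (hc' : Monotone c')
    (h : ∀ i, Fintype.card {a // c a = i} = Fintype.card {a // c' a = i}) : c = c' := by
  set p : Fin n ≃ Fin n := Equiv.ofFiberEquiv (f := c) (g := c')
    (fun i => Fintype.equivOfCardEq (h i)) with hp
  have hcp : c' ∘ p = c := by
    funext a
    exact Equiv.ofFiberEquiv_map _ a
  have h1 := (Tuple.comp_sort_eq_comp_iff_monotone (f := c') (σ := p)).mpr (by rw [hcp]; exact hc)
  have h2 := (Tuple.comp_sort_eq_comp_iff_monotone (f := c') (σ := 1)).mpr hc'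
  rw [← hcp, h1, ← h2]; rfl

lemma exists_mono_card {n m : ℕ} (l : Fin m → ℕ) (hl : ∑ i, l i = n) :
    ∃ c : Fin n → Fin m, Monotone c ∧ ∀ i, Fintype.card {a // c a = i} = l i := by
  have e : Fin n ≃ Σ i : Fin m, Fin (l i) := Fintype.equivOfCardEq (by simp [hl])
  refine ⟨(Sigma.fst ∘ e) ∘ Tuple.sort (Sigma.fst ∘ e), Tuple.monotone_sort _, fun i => ?_⟩
  rw [← Fintype.card_fin (l i)]
  refine Fintype.card_congr (Equiv.trans ?_ (Equiv.sigmaSubtype (β := fun i => Fin (l i)) i))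
  exact ((Tuple.sort (Sigma.fst ∘ e)).trans e).subtypeEquiv (fun a => by simp)

lemma sum_mono_prod {n m : ℕ} (a : ℕ → ℚ) [DecidablePred (fun c : Fin n → Fin m => Monotone c)] :
    ∑ c ∈ Finset.univ.filter (fun c : Fin n → Fin m => Monotone c),
      ∏ i, a (Fintype.card {x // c x = i}) = PowerSeries.coeff n (PowerSeries.mk a ^ m) := by
  classical
  have : PowerSeries.mk a ^ m = ∏ _i : Fin m, PowerSeries.mk a := by simp
  rw [this, PowerSeries.coeff_prod]
  refine Finset.sum_bij (fun c _ => Finsupp.equivFunOnFinite.symm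
    (fun i => Fintype.card {x // c x = i})) ?_ ?_ ?_ ?_
  · intro c hc
    rw [Finset.mem_finsuppAntidiag]
    refine ⟨?_, Finset.subset_univ _⟩
    simp only [Finsupp.equivFunOnFinite_symm_apply_apply]
    rw [← Fintype.card_sigma, Fintype.card_congr (Equiv.sigmaFiberEquiv c), Fintype.card_fin]
  · intro c hc c' hc' h
    simp only [Finset.mem_filter, Finset.mem_univ, true_and] at hc hc'
    refine mono_eq_of_card hc hc' fun i => ?_
    have := DFunLike.congr_fun h i
    simpa using this
  · intro l hl
    rw [Finset.mem_finsuppAntidiag] at hl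
    obtain ⟨c, hc, hcl⟩ := exists_mono_card l hl.1
    refine ⟨c, by simpa using hc, ?_⟩
    ext i
    simp [hcl]
  · intro c hc
    simp

/-- number of pairs `(π, c)` for fixed quotient `σ`. -/
lemma card_cong {n m : ℕ} (σ : Equiv.Perm (Fin m)) :
    (Nat.card {p : Equiv.Perm (Fin n) × (Fin n → Fin m) // Cong p.1 σ p.2} : ℚ) =
      PowerSeries.coeff n (facSeries ^ m) := by
  classical
  have e : {p : Equiv.Perm (Fin n) × (Fin n → Fin m) // Cong p.1 σ p.2} ≃
      Σ c : {c : Fin n → Fin m // Monotone c ∧ Function.Surjective c},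
        {τ : Equiv.Perm (Fin n) // Monotone ((σ ∘ c.1) ∘ τ)} :=
    { toFun := fun p => ⟨⟨p.1.2, p.2.1, p.2.2.1⟩, ⟨p.1.1.symm, p.2.2.2⟩⟩
      invFun := fun q => ⟨⟨q.2.1.symm, q.1.1⟩, q.1.2.1, q.1.2.2, q.2.2⟩
      left_inv := fun p => rfl
      right_inv := fun q => rfl }
  rw [Nat.card_congr e, Nat.card_sigma]
  have hcard : ∀ c : Fin n → Fin m,
      Nat.card {τ : Equiv.Perm (Fin n) // Monotone ((σ ∘ c) ∘ τ)} =
        ∏ i, (Fintype.card {x // c x = i}).factorial := by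
    intro c
    rw [card_mono_comp]
    rw [← Equiv.prod_comp σ]
    refine Finset.prod_congr rfl fun i _ => ?_
    congr 1
    refine Fintype.card_congr (Equiv.subtypeEquivRight fun x => ?_)
    simp
  simp_rw [hcard]
  unfold facSeries
  rw [← sum_mono_prod]
  rw [← Finset.sum_subtype (Finset.univ.filter fun c : Fin n → Fin m =>
    Monotone c ∧ Function.Surjective c) (by simp)
    (fun c => ∏ i, (Fintype.card {x // c x = i}).factorial)]
  push_cast
  rw [← Finset.sum_subset (s₁ := Finset.univ.filter fun c : Fin n → Fin m =>
    Monotone c ∧ Function.Surjective c) (s₂ := Finset.univ.filter fun c : Fin n → Fin m =>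
    Monotone c)]
  · refine Finset.sum_congr rfl fun c hc => Finset.prod_congr rfl fun i _ => ?_
    simp only [Finset.mem_filter, Finset.mem_univ, true_and] at hc
    obtain ⟨x, hx⟩ := hc.2 i
    have : Nonempty {x // c x = i} := ⟨⟨x, hx⟩⟩
    have : Fintype.card {x // c x = i} ≠ 0 := Fintype.card_ne_zero
    rw [if_neg this]
  · intro c hc
    simp only [Finset.mem_filter, Finset.mem_univ, true_and] at hc ⊢
    exact hc.1
  · intro c hc hc'
    simp only [Finset.mem_filter, Finset.mem_univ, true_and] at hc hc'
    have : ¬ Function.Surjective c := fun h => hc' ⟨hc, h⟩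
    unfold Function.Surjective at this
    push Not at this
    obtain ⟨i, hi⟩ := this
    refine Finset.prod_eq_zero (Finset.mem_univ i) ?_
    rw [if_pos]
    rw [Fintype.card_eq_zero_iff]
    exact ⟨fun x => hi x.1 x.2⟩

/-- `π` preserves `[0,k)`. -/
def Pres {n : ℕ} (k : ℕ) (π : Equiv.Perm (Fin n)) : Prop :=
  0 < k ∧ ∀ i : Fin n, (i : ℕ) < k → (π i : ℕ) < k

/-- number of sum-indecomposable permutations -/
noncomputable def indCount (n : ℕ) : ℕ := Nat.card {π : Equiv.Perm (Fin n) // ¬ SumDec π}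

/-- direct sum of permutations -/
def dsum {k l : ℕ} (p : Equiv.Perm (Fin k) × Equiv.Perm (Fin l)) : Equiv.Perm (Fin (k + l)) :=
  finSumFinEquiv.permCongr (Equiv.Perm.sumCongr p.1 p.2)

lemma dsum_castAdd {k l : ℕ} (p : Equiv.Perm (Fin k) × Equiv.Perm (Fin l)) (i : Fin k) :
    dsum p (Fin.castAdd l i) = Fin.castAdd l (p.1 i) := by
  simp [dsum, Equiv.permCongr_apply]

lemma dsum_injective {k l : ℕ} : Function.Injective (dsum (k := k) (l := l)) := by
  intro p q h
  have h1 := (finSumFinEquiv.permCongr).injective h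
  have := Equiv.Perm.sumCongrHom_injective (α := Fin k) (β := Fin l) (a₁ := p) (a₂ := q) h1
  exact this

lemma dsum_surj {k l : ℕ} (π : Equiv.Perm (Fin (k + l)))
    (h : ∀ i : Fin (k + l), (i : ℕ) < k → (π i : ℕ) < k) : ∃ p, dsum p = π := by
  have hm : Set.MapsTo (finSumFinEquiv.symm.permCongr π) (Set.range Sum.inl)
      (Set.range (Sum.inl : Fin k → Fin k ⊕ Fin l)) := by
    rintro _ ⟨i, rfl⟩
    have h1 := h (Fin.castAdd l i) (by simp)
    refine ⟨⟨_, h1⟩, ?_⟩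
    simp only [Equiv.permCongr_apply, Equiv.symm_symm, finSumFinEquiv_apply_left]
    rw [Equiv.eq_symm_apply]
    apply Fin.ext
    simp
  obtain ⟨p, hp⟩ := Equiv.Perm.mem_sumCongrHom_range_of_perm_mapsTo_inl hm
  refine ⟨p, ?_⟩
  have : dsum p = finSumFinEquiv.permCongr (finSumFinEquiv.symm.permCongr π) := by
    rw [← hp]; rfl
  rw [this]
  ext x
  simp [Equiv.permCongr_apply]

lemma pres_dsum {k l j : ℕ} (hj : j < k) (p : Equiv.Perm (Fin k) × Equiv.Perm (Fin l)) :
    Pres j (dsum p) ↔ Pres j p.1 := by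
  unfold Pres
  refine and_congr_right fun _ => ?_
  constructor
  · intro h i hi
    have := h (Fin.castAdd l i) (by simpa using hi)
    rw [dsum_castAdd] at this
    simpa using this
  · intro h i hi
    obtain ⟨i', rfl⟩ : ∃ i' : Fin k, i = Fin.castAdd l i' := ⟨⟨i, by omega⟩, rfl⟩
    have := h i' (by simpa using hi)
    rw [dsum_castAdd]
    simpa using this

lemma not_sumDec_iff {k : ℕ} (α : Equiv.Perm (Fin k)) :
    ¬ SumDec α ↔ ∀ j < k, ¬ Pres j α := by
  unfold SumDec Pres
  constructor
  · rintro h j hj ⟨h1, h2⟩; exact h ⟨j, h1, hj, h2⟩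
  · rintro h ⟨j, h1, hj, h2⟩; exact h j hj ⟨h1, h2⟩

lemma card_minPres (k l : ℕ) :
    Nat.card {π : Equiv.Perm (Fin (k + l)) // Pres k π ∧ ∀ j < k, ¬ Pres j π} =
      (if k = 0 then 0 else indCount k) * l.factorial := by
  split_ifs with hk
  · subst hk
    rw [zero_mul]
    have : IsEmpty {π : Equiv.Perm (Fin (0 + l)) // Pres 0 π ∧ ∀ j < 0, ¬ Pres j π} :=
      ⟨fun p => absurd p.2.1.1 (lt_irrefl 0)⟩
    exact Nat.card_of_isEmpty
  · have hl : l.factorial = Nat.card (Equiv.Perm (Fin l)) := by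
      rw [Nat.card_perm, Nat.card_fin]
    rw [hl, indCount, ← Nat.card_prod]
    symm
    refine Nat.card_congr (Equiv.ofBijective (fun q => ⟨dsum (q.1.1, q.2), ?_, ?_⟩) ⟨?_, ?_⟩)
    · refine ⟨by omega, fun i hi => ?_⟩
      obtain ⟨i', rfl⟩ : ∃ i' : Fin k, i = Fin.castAdd l i' := ⟨⟨i, by omega⟩, rfl⟩
      rw [dsum_castAdd]
      simp
    · intro j hj
      rw [pres_dsum hj]
      exact (not_sumDec_iff _).mp q.1.2 j hj
    · rintro ⟨⟨a, ha⟩, b⟩ ⟨⟨a', ha'⟩, b'⟩ h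
      have := dsum_injective (Subtype.mk.inj h)
      simp only [Prod.mk.injEq] at this
      obtain ⟨rfl, rfl⟩ := this
      rfl
    · rintro ⟨π, h1, h2⟩
      obtain ⟨p, rfl⟩ := dsum_surj π h1.2
      refine ⟨⟨⟨p.1, (not_sumDec_iff _).mpr fun j hj => ?_⟩, p.2⟩, rfl⟩
      rw [← pres_dsum hj]
      exact h2 j hj

lemma factorial_eq_sum {n : ℕ} (hn : 0 < n) :
    n.factorial = ∑ k ∈ Finset.range (n + 1),
      (if k = 0 then 0 else indCount k) * (n - k).factorial := by
  classical
  have hex : ∀ π : Equiv.Perm (Fin n), ∃ k, Pres k π := fun π => ⟨n, hn, fun i _ => (π i).isLt⟩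
  have h0 : n.factorial = (Finset.univ : Finset (Equiv.Perm (Fin n))).card := by
    rw [Finset.card_univ, Fintype.card_perm, Fintype.card_fin]
  rw [h0, Finset.card_eq_sum_card_fiberwise (f := fun π => Nat.find (hex π))
    (t := Finset.range (n + 1))]
  · refine Finset.sum_congr rfl fun k hk => ?_
    obtain ⟨l, rfl⟩ := Nat.exists_eq_add_of_le (Nat.lt_succ_iff.mp (Finset.mem_range.mp hk))
    rw [Nat.add_sub_cancel_left, ← card_minPres, Nat.subtype_card]
    intro π
    simp [Nat.find_eq_iff]
  · intro π _
    rw [Finset.mem_coe, Finset.mem_range, Nat.lt_succ_iff]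
    exact Nat.find_min' _ ⟨hn, fun i _ => (π i).isLt⟩

/-- generating function of the indecomposables -/
noncomputable def indSeries : PowerSeries ℚ :=
  PowerSeries.mk fun n => if n = 0 then 0 else (indCount n : ℚ)

lemma facSeries_eq_ind : facSeries = indSeries * (1 + facSeries) := by
  ext n
  rw [PowerSeries.coeff_mul, Finset.Nat.sum_antidiagonal_eq_sum_range_succ_mk]
  have h1 : ∀ l, PowerSeries.coeff l (1 + facSeries) = (l.factorial : ℚ) := by
    intro l
    rw [map_add, facSeries, PowerSeries.coeff_mk, PowerSeries.coeff_one]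
    split_ifs with h
    · subst h; simp
    · simp
  simp only [h1]
  rcases Nat.eq_zero_or_pos n with rfl | hn
  · simp [facSeries, indSeries]
  · have := factorial_eq_sum hn
    rw [facSeries, PowerSeries.coeff_mk, if_neg hn.ne', this]
    push_cast
    simp [indSeries]

lemma card_both {n : ℕ} (hn : 2 ≤ n) :
    (Nat.card {π : Equiv.Perm (Fin n) // ¬ SumDec π ∧ ¬ SkewDec π} : ℚ) =
      ∑ m ∈ Finset.Icc 3 n, (simpleCount m : ℚ) * PowerSeries.coeff n (facSeries ^ m) := by
  classical
  have h1 : Nat.card {π : Equiv.Perm (Fin n) // ¬ SumDec π ∧ ¬ SkewDec π} =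
      Nat.card (Σ m : {m // m ∈ Finset.Icc 3 n}, Σ σ : {σ : Equiv.Perm (Fin m.1) // IsSimplePerm σ},
        {p : Equiv.Perm (Fin n) × (Fin n → Fin m.1) // Cong p.1 σ.1 p.2}) := by
    symm
    refine Nat.card_congr (Equiv.ofBijective (fun q => ⟨q.2.2.1.1, ?_, ?_⟩) ⟨?_, ?_⟩)
    · intro h
      exact no_cong_of_dec (Or.inl h) q.2.2.2 (Finset.mem_Icc.mp q.1.2).1 q.2.1.2
    · intro h
      exact no_cong_of_dec (Or.inr h) q.2.2.2 (Finset.mem_Icc.mp q.1.2).1 q.2.1.2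
    · rintro ⟨⟨m, hm⟩, ⟨σ, hσ⟩, ⟨⟨π, c⟩, hc⟩⟩ ⟨⟨m', hm'⟩, ⟨σ', hσ'⟩, ⟨⟨π', c'⟩, hc'⟩⟩ h
      have h2 : π = π' := Subtype.mk.inj h
      subst h2
      have := Cong.unique hc (Finset.mem_Icc.mp hm).1 hσ hc' (Finset.mem_Icc.mp hm').1 hσ'
      cases this
      rfl
    · rintro ⟨π, h2, h3⟩
      obtain ⟨m, hm, σ, c, hσ, hc⟩ := exists_cong hn π h2 h3
      have hmn : m ≤ n := by
        simpa using Fintype.card_le_of_surjective c hc.2.1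
      exact ⟨⟨⟨m, Finset.mem_Icc.mpr ⟨hm, hmn⟩⟩, ⟨σ, hσ⟩, ⟨⟨π, c⟩, hc⟩⟩, rfl⟩
  rw [h1, Nat.card_sigma]
  push_cast
  rw [← Finset.sum_coe_sort (Finset.Icc 3 n)]
  refine Finset.sum_congr rfl fun m _ => ?_
  rw [Nat.card_sigma]
  push_cast
  simp only [card_cong]
  rw [Finset.sum_const, nsmul_eq_mul, simpleCount, Nat.card_eq_fintype_card, Finset.card_univ]

lemma card_skew (n : ℕ) :
    Nat.card {π : Equiv.Perm (Fin n) // ¬ SkewDec π} = indCount n := by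
  refine Nat.card_congr ((Equiv.mulLeft (Fin.revPerm : Equiv.Perm (Fin n))).subtypeEquiv ?_)
  intro π
  rfl

lemma factorial_decomp {n : ℕ} (hn : 2 ≤ n) :
    (n.factorial : ℚ) = 2 * (n.factorial - indCount n) +
      ∑ m ∈ Finset.Icc 3 n, (simpleCount m : ℚ) * PowerSeries.coeff n (facSeries ^ m) := by
  classical
  rw [← card_both hn]
  have h0 : n.factorial = (Finset.univ : Finset (Equiv.Perm (Fin n))).card := by
    rw [Finset.card_univ, Fintype.card_perm, Fintype.card_fin]
  have h1 : indCount n = (Finset.univ.filter fun π : Equiv.Perm (Fin n) => ¬ SumDec π).card := by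
    rw [indCount, Nat.subtype_card]; simp
  have h2 : indCount n = (Finset.univ.filter fun π : Equiv.Perm (Fin n) => ¬ SkewDec π).card := by
    rw [← card_skew, Nat.subtype_card]; simp
  have h3 : Nat.card {π : Equiv.Perm (Fin n) // ¬ SumDec π ∧ ¬ SkewDec π} =
      ((Finset.univ.filter fun π : Equiv.Perm (Fin n) => ¬ SumDec π) ∩
      (Finset.univ.filter fun π : Equiv.Perm (Fin n) => ¬ SkewDec π)).card := by
    rw [Nat.subtype_card]; simp
  have h4 : (Finset.univ : Finset (Equiv.Perm (Fin n))) =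
      (Finset.univ.filter fun π : Equiv.Perm (Fin n) => ¬ SumDec π) ∪
      (Finset.univ.filter fun π : Equiv.Perm (Fin n) => ¬ SkewDec π) := by
    ext π
    simp only [Finset.mem_univ, Finset.mem_union, Finset.mem_filter, true_and, true_iff]
    by_contra h
    push Not at h
    exact sum_skew_disjoint h.1 h.2
  have h5 := Finset.card_union_add_card_inter
    (Finset.univ.filter fun π : Equiv.Perm (Fin n) => ¬ SumDec π)
    (Finset.univ.filter fun π : Equiv.Perm (Fin n) => ¬ SkewDec π)
  rw [← h4, ← h0, ← h1, ← h2, ← h3] at h5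
  have h6 : (n.factorial : ℚ) + Nat.card {π : Equiv.Perm (Fin n) // ¬ SumDec π ∧ ¬ SkewDec π} =
    indCount n + indCount n := by exact_mod_cast h5
  linarith

lemma coeff_facSeries_pow {n m : ℕ} (h : n < m) : PowerSeries.coeff n (facSeries ^ m) = 0 := by
  have hX : PowerSeries.X ∣ facSeries := by
    rw [PowerSeries.X_dvd_iff]; simp [facSeries]
  exact PowerSeries.X_pow_dvd_iff.mp (pow_dvd_pow_of_dvd hX m) n h

/-- generating function of simple permutations, as used in `IsPRecursive` -/
noncomputable def simpSeries : PowerSeries ℚ := PowerSeries.mk fun n => (simpleCount n : ℚ)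

lemma coeff_simp_subst (n : ℕ) :
    PowerSeries.coeff n (simpSeries.subst facSeries) =
      ∑ m ∈ Finset.range (n + 3), (simpleCount m : ℚ) * PowerSeries.coeff n (facSeries ^ m) := by
  rw [PowerSeries.coeff_subst' hasSubst_F, finsum_eq_sum_of_support_subset (s := Finset.range (n + 3))]
  · simp [simpSeries]
  · intro m hm
    by_contra h
    rw [Finset.coe_range, Set.mem_Iio, not_lt] at h
    exact hm (by beta_reduce; rw [coeff_facSeries_pow (by omega), smul_zero])

lemma indCount_one : indCount 1 = 1 := by
  have : ∀ π : Equiv.Perm (Fin 1), ¬ SumDec π := by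
    rintro π ⟨k, h1, h2, _⟩; omega
  rw [indCount, Nat.card_congr (Equiv.subtypeUnivEquiv this)]
  simp

open PowerSeries in
lemma simp_subst_eq :
    simpSeries.subst facSeries = C (simpleCount 0 : ℚ) + C (simpleCount 1 : ℚ) * facSeries
      + C (simpleCount 2 : ℚ) * facSeries ^ 2 + (facSeries - X - 2 * (facSeries - indSeries)) := by
  ext n
  have hsplit : ∑ m ∈ Finset.range (n + 3), (simpleCount m : ℚ) * coeff n (facSeries ^ m) =
      ∑ m ∈ Finset.range 3, (simpleCount m : ℚ) * coeff n (facSeries ^ m) +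
      ∑ m ∈ Finset.Icc 3 n, (simpleCount m : ℚ) * coeff n (facSeries ^ m) := by
    rw [Finset.range_eq_Ico, Finset.range_eq_Ico,
      ← Finset.sum_Ico_consecutive _ (Nat.zero_le 3) (Nat.le_add_left 3 n)]
    congr 1
    symm
    apply Finset.sum_subset
    · intro m hm
      rw [Finset.mem_Icc] at hm
      rw [Finset.mem_Ico]; omega
    · intro m hm hm'
      rw [Finset.mem_Icc] at hm'
      rw [Finset.mem_Ico] at hm
      rw [coeff_facSeries_pow (by omega), mul_zero]
  have h2 : (2 : ℚ⟦X⟧) = C (2 : ℚ) := (map_ofNat C 2).symm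
  have hT : ∑ m ∈ Finset.Icc 3 n, (simpleCount m : ℚ) * coeff n (facSeries ^ m) =
      coeff n (facSeries - X - 2 * (facSeries - indSeries)) := by
    rw [h2, map_sub, map_sub, coeff_C_mul, map_sub]
    rcases Nat.lt_or_ge n 2 with hn | hn
    · rw [Finset.Icc_eq_empty (by omega), Finset.sum_empty]
      have : n = 0 ∨ n = 1 := by omega
      rcases this with rfl | rfl
      · simp [facSeries, indSeries]
      · simp [facSeries, indSeries, indCount_one, coeff_X]
    · have hd := factorial_decomp hn
      have h0 : n ≠ 0 := by omega
      have h1 : n ≠ 1 := by omega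
      simp only [facSeries, indSeries, coeff_mk, if_neg h0, coeff_X, if_neg h1] at hd ⊢
      linarith
  rw [coeff_simp_subst, hsplit, hT]
  simp only [Finset.sum_range_succ, Finset.sum_range_zero, map_add, coeff_C_mul, pow_zero, pow_one,
    zero_add, coeff_one, coeff_C]
  simp

lemma main_relation :
    (1 + facSeries) * simpSeries.subst facSeries =
      (1 + facSeries) * (PowerSeries.C (simpleCount 0 : ℚ) +
        PowerSeries.C (simpleCount 1 : ℚ) * facSeries +
        PowerSeries.C (simpleCount 2 : ℚ) * facSeries ^ 2 + facSeries - PowerSeries.X)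
        - 2 * facSeries ^ 2 := by
  rw [simp_subst_eq]
  linear_combination (-2 : PowerSeries ℚ) * facSeries_eq_ind

/-- The sequence `(sₙ)_{n≥1}` of numbers of simple permutations is not P-recursive. -/
theorem simpleCount_not_PRecursive :
    ¬ IsPRecursive (fun n => (simpleCount n : ℚ)) := by
  intro h
  obtain ⟨K, q, r, hq, hr⟩ := exists_relation _ h
  exact no_relation simpSeries _ _ _ main_relation K q r hq hr
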